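/- arXiv:1403.7610 — 4 statements merged into one kernel-verified Lean document; each statement's English description precedes it below -/
import Mathlib

section
/- In M₀, for every n ≥ 1 the equivalence relation induced by E_n on the set of n-element subsets of M₀ has infinitely many equivalence classes, and every one of its equivalence classes is infinite. -/
open FirstOrder Language Structure CategoryTheory

/-- The language `L₀` with a `2n`-ary relation symbol `E_n` for each `n ≥ 1`. -/
def L₀ : FirstOrder.Language where
  Functions := fun _ => Empty
  Relations := fun k => {n : ℕ // 0 < n ∧ k = n + n}

/-- The relation symbol `E_n`. -/
def Esymb (n : ℕ) (hn : 0 < n) : L₀.Relations (n + n) := ⟨n, hn, rfl⟩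

/-- `E_n(x̄, ȳ)` in an `L₀`-structure. -/
def ERel (M : Type*) [L₀.Structure M] (n : ℕ) (hn : 0 < n) (x y : Fin n → M) : Prop :=
  Structure.RelMap (Esymb n hn) (Fin.append x y)

/-- The defining conditions for membership in `K₀`: each `E_n` holds only on pairs of
injective `n`-tuples, is invariant under permuting the entries of each tuple separately,
and induces an equivalence relation on `n`-element subsets. -/
def IsK0Struct (C : Type*) [L₀.Structure C] : Prop :=
  ∀ (n : ℕ) (hn : 0 < n),
    (∀ x y : Fin n → C, ERel C n hn x y → Function.Injective x ∧ Function.Injective y) ∧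
    (∀ (x y : Fin n → C) (σ τ : Equiv.Perm (Fin n)),
        ERel C n hn x y → ERel C n hn (x ∘ σ) (y ∘ τ)) ∧
    (∀ x : Fin n → C, Function.Injective x → ERel C n hn x x) ∧
    (∀ x y : Fin n → C, ERel C n hn x y → ERel C n hn y x) ∧
    (∀ x y z : Fin n → C, ERel C n hn x y → ERel C n hn y z → ERel C n hn x z)

/-- The class `K₀` of finite `L₀`-structures as above. -/
def K₀ : Set (Bundled L₀.Structure) := {C | Finite C ∧ IsK0Struct C}


theorem ERel_embed {A B : Type*} [L₀.Structure A] [L₀.Structure B] (e : A ↪[L₀] B)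
    (n : ℕ) (hn : 0 < n) (x y : Fin n → A) :
    ERel B n hn (e ∘ x) (e ∘ y) ↔ ERel A n hn x y := by
  unfold ERel
  rw [← e.map_rel]
  have : Fin.append (e ∘ x) (e ∘ y) = e ∘ Fin.append x y := by
    funext i
    refine Fin.addCases (fun i => ?_) (fun i => ?_) i <;>
      simp [-Fin.natAdd_eq_addNat, Fin.append_left, Fin.append_right]
  rw [this]

/-- Embeddings of `L₀`-structures from `ERel`. -/
def embOf {A B : Type*} [L₀.Structure A] [L₀.Structure B] (f : A → B)
    (hf : Function.Injective f)
    (h : ∀ n hn (x y : Fin n → A), ERel B n hn (f ∘ x) (f ∘ y) ↔ ERel A n hn x y) :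
    A ↪[L₀] B where
  toFun := f
  inj' := hf
  map_fun' := fun g _ => g.elim
  map_rel' := by
    rintro k ⟨n, hn, rfl⟩ v
    have h' := h n hn (v ∘ Fin.castAdd n) (v ∘ Fin.natAdd n)
    unfold ERel at h'
    have e1 : Fin.append (v ∘ Fin.castAdd n) (v ∘ Fin.natAdd n) = v := by
      funext i
      refine Fin.addCases (fun i => ?_) (fun i => ?_) i <;>
      simp [-Fin.natAdd_eq_addNat, Fin.append_left, Fin.append_right]
    have e2 : Fin.append (f ∘ v ∘ Fin.castAdd n) (f ∘ v ∘ Fin.natAdd n) = f ∘ v := by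
      funext i
      refine Fin.addCases (fun i => ?_) (fun i => ?_) i <;>
      simp [-Fin.natAdd_eq_addNat, Fin.append_left, Fin.append_right]
    rw [e1, e2] at h'
    exact h'

/-- Structure given by a family of relations on tuples. -/
def mkStr (C : Type) (R : ∀ n, (Fin n → C) → (Fin n → C) → Prop) : L₀.Structure C where
  funMap := fun g _ => g.elim
  RelMap := fun {k} r v =>
    R r.1 (fun i => v (Fin.cast r.2.2.symm (Fin.castAdd r.1 i)))
      (fun i => v (Fin.cast r.2.2.symm (Fin.natAdd r.1 i)))

theorem ERel_mkStr (C : Type) (R : ∀ n, (Fin n → C) → (Fin n → C) → Prop)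
    (n : ℕ) (hn : 0 < n) (x y : Fin n → C) :
    @ERel C (mkStr C R) n hn x y ↔ R n x y := by
  unfold ERel
  change R n (fun i => Fin.append x y (Fin.castAdd n i))
    (fun i => Fin.append x y (Fin.natAdd n i)) ↔ _
  simp only [Fin.append_left, Fin.append_right]

theorem fg_of_fin (C : Type) [L₀.Structure C] [Finite C] : Structure.FG L₀ C := by
  rw [Structure.fg_def, Substructure.fg_def]
  exact ⟨Set.univ, Set.finite_univ, by simp⟩

theorem inf_of {A : Type*} (h : ∀ N : ℕ, ∃ f : Fin N → A, Function.Injective f) : Infinite A := by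
  by_contra hA
  rw [not_infinite_iff_finite] at hA
  obtain ⟨f, hf⟩ := h (Nat.card A + 1)
  have := Nat.card_le_card_of_injective f hf
  simp at this

/-- `M₀` satisfies the axioms. -/
theorem isK0_of_age (M : Type) [L₀.Structure M] (hage : L₀.age M = K₀) : IsK0Struct M := by
  have key : ∀ (n : ℕ) (x y z : Fin n → M), ∃ (F : Type) (_ : L₀.Structure F) (e : F ↪[L₀] M)
      (x' y' z' : Fin n → F), IsK0Struct F ∧ e ∘ x' = x ∧ e ∘ y' = y ∧ e ∘ z' = z := by
    intro n x y z
    let S : Set M := Set.range x ∪ Set.range y ∪ Set.range z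
    have hS : S.Finite := ((Set.finite_range x).union (Set.finite_range y)).union
      (Set.finite_range z)
    have : Finite S := hS
    letI str : L₀.Structure S :=
      mkStr S (fun n u v => ∃ hn : 0 < n, ERel M n hn (Subtype.val ∘ u) (Subtype.val ∘ v))
    let e : S ↪[L₀] M := embOf Subtype.val Subtype.val_injective (by
      intro n hn u v
      rw [ERel_mkStr]
      exact ⟨fun h => ⟨hn, h⟩, fun ⟨_, h⟩ => h⟩)
    have hm : (Bundled.mk S str : Bundled L₀.Structure) ∈ L₀.age M := ⟨fg_of_fin S, ⟨e⟩⟩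
    rw [hage] at hm
    refine ⟨S, str, e, fun i => ⟨x i, ?_⟩, fun i => ⟨y i, ?_⟩, fun i => ⟨z i, ?_⟩, hm.2,
      rfl, rfl, rfl⟩ <;> simp [S]
  intro n hn
  refine ⟨fun x y h => ?_, fun x y σ τ h => ?_, fun x h => ?_, fun x y h => ?_,
    fun x y z h h2 => ?_⟩
  · obtain ⟨F, _, e, x, y, -, hF, rfl, rfl, -⟩ := key n x y y
    rw [ERel_embed] at h
    have := (hF n hn).1 x y h
    exact ⟨e.injective.comp this.1, e.injective.comp this.2⟩
  · obtain ⟨F, _, e, x, y, -, hF, rfl, rfl, -⟩ := key n x y y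
    rw [ERel_embed] at h
    have := (hF n hn).2.1 x y σ τ h
    rw [← ERel_embed e] at this
    exact this
  · obtain ⟨F, _, e, x, -, -, hF, rfl, -, -⟩ := key n x x x
    rw [ERel_embed]
    exact (hF n hn).2.2.1 x h.of_comp
  · obtain ⟨F, _, e, x, y, -, hF, rfl, rfl, -⟩ := key n x y y
    rw [ERel_embed] at h ⊢
    exact (hF n hn).2.2.2.1 x y h
  · obtain ⟨F, _, e, x, y, z, hF, rfl, rfl, rfl⟩ := key n x y z
    rw [ERel_embed] at h h2 ⊢
    exact (hF n hn).2.2.2.2 x y z h h2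

theorem range_perm {C : Type*} {n : ℕ} (x : Fin n → C) (σ : Equiv.Perm (Fin n)) :
    Set.range (x ∘ σ) = Set.range x := σ.surjective.range_comp x

theorem part1 (M : Type) [L₀.Structure M] (hage : L₀.age M = K₀) (n : ℕ) (hn : 0 < n) (N : ℕ) :
    ∃ f : Fin N → (Fin n → M), (∀ i, Function.Injective (f i)) ∧
      ∀ i j, ERel M n hn (f i) (f j) → i = j := by
  let C := Fin N × Fin n
  letI str : L₀.Structure C := mkStr C (fun n x y => Function.Injective x ∧ Function.Injective y ∧
    Set.range x = Set.range y)
  have hm : (Bundled.mk C str : Bundled L₀.Structure) ∈ K₀ := by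
    refine ⟨inferInstanceAs (Finite C), ?_⟩
    change IsK0Struct C
    intro n hn
    simp only [ERel_mkStr, str, -eq_self]
    refine ⟨fun x y h => ⟨h.1, h.2.1⟩, fun x y σ τ h => ⟨h.1.comp σ.injective,
      h.2.1.comp τ.injective, ?_⟩, fun x h => ⟨h, h, by trivial⟩, fun x y h => ⟨h.2.1, h.1, h.2.2.symm⟩,
      fun x y z h h2 => ⟨h.1, h2.2.1, h.2.2.trans h2.2.2⟩⟩
    rw [range_perm, range_perm, h.2.2]
  rw [← hage] at hm
  obtain ⟨-, ⟨e⟩⟩ := hm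
  change C ↪[L₀] M at e
  refine ⟨fun i => e ∘ (fun a => (i, a)), fun i => e.injective.comp (fun a b h => congrArg Prod.snd h),
    fun i j h => ?_⟩
  rw [ERel_embed, ERel_mkStr] at h
  have : ((i, ⟨0, hn⟩) : C) ∈ Set.range (fun a : Fin n => ((j, a) : C)) := by
    rw [← h.2.2]; exact ⟨_, rfl⟩
  obtain ⟨a, ha⟩ := this
  exact (congrArg Prod.fst ha).symm

theorem part2 (M : Type) [L₀.Structure M] (hUH : L₀.IsUltrahomogeneous M)
    (hage : L₀.age M = K₀) (n : ℕ) (hn : 0 < n) (x : Fin n → M) (hx : Function.Injective x)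
    (N : ℕ) :
    ∃ f : Fin N → (Fin n → M), (∀ i, Function.Injective (f i)) ∧
      (∀ i, ERel M n hn x (f i)) ∧ ∀ i j, Set.range (f i) = Set.range (f j) → i = j := by
  have hM := isK0_of_age M hage
  let C := Fin (N + 1) × Fin n
  let p : C → M := fun c => x c.2
  letI strS : L₀.Structure (Fin n) :=
    mkStr (Fin n) (fun n u v => ∃ hn : 0 < n, ERel M n hn (x ∘ u) (x ∘ v))
  letI strC : L₀.Structure C :=
    mkStr C (fun n u v => Function.Injective u ∧ Function.Injective v ∧
      ((¬ Function.Injective (p ∘ u) ∧ ¬ Function.Injective (p ∘ v)) ∨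
        ∃ hn : 0 < n, ERel M n hn (p ∘ u) (p ∘ v)))
  have hm : (Bundled.mk C strC : Bundled L₀.Structure) ∈ K₀ := by
    refine ⟨inferInstanceAs (Finite C), ?_⟩
    change IsK0Struct C
    intro n hn
    obtain ⟨h1, h2, h3, h4, h5⟩ := hM n hn
    simp only [ERel_mkStr, strC]
    refine ⟨fun x y h => ⟨h.1, h.2.1⟩, fun x y σ τ h => ⟨h.1.comp σ.injective,
      h.2.1.comp τ.injective, ?_⟩, fun x h => ⟨h, h, ?_⟩, fun x y h => ⟨h.2.1, h.1, ?_⟩,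
      fun x y z h h2 => ⟨h.1, h2.2.1, ?_⟩⟩
    · rcases h.2.2 with ⟨a, b⟩ | ⟨_, h⟩
      · left
        rw [← Function.comp_assoc, ← Function.comp_assoc, σ.injective_comp, τ.injective_comp]
        exact ⟨a, b⟩
      · exact Or.inr ⟨hn, h2 _ _ σ τ h⟩
    · by_cases hi : Function.Injective (p ∘ x)
      · exact Or.inr ⟨hn, h3 _ hi⟩
      · exact Or.inl ⟨hi, hi⟩
    · rcases h.2.2 with ⟨a, b⟩ | ⟨_, h⟩
      · exact Or.inl ⟨b, a⟩
      · exact Or.inr ⟨hn, h4 _ _ h⟩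
    · rcases h.2.2 with ⟨a, b⟩ | ⟨_, h⟩ <;> rcases h2.2.2 with ⟨c, d⟩ | ⟨_, h'⟩
      · exact Or.inl ⟨a, d⟩
      · exact absurd (h1 _ _ h').1 b
      · exact absurd (h1 _ _ h).2 c
      · exact Or.inr ⟨hn, h5 _ _ _ h h'⟩
  rw [← hage] at hm
  obtain ⟨-, hne⟩ := hm
  change Nonempty (C ↪[L₀] M) at hne
  let f : Fin n ↪[L₀] M := embOf x hx (by
    intro n hn u v
    rw [ERel_mkStr]
    exact ⟨fun h => ⟨hn, h⟩, fun ⟨_, h⟩ => h⟩)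
  let g : Fin n ↪[L₀] C := embOf (fun a => ((0, a) : C)) (fun a b h => congrArg Prod.snd h) (by
    intro n hn u v
    rw [ERel_mkStr, ERel_mkStr]
    constructor
    · rintro ⟨a, b, ⟨c, d⟩ | h⟩
      · have : Function.Injective u := a.of_comp
        exact absurd (hx.comp this) c
      · exact h
    · intro h
      obtain ⟨hn, h'⟩ := h
      have := (hM n hn).1 _ _ h'
      have i0 : Function.Injective (fun a => ((0, a) : C)) := fun a b h => congrArg Prod.snd h
      exact ⟨i0.comp this.1.of_comp, i0.comp this.2.of_comp, Or.inr ⟨hn, h'⟩⟩)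
  obtain ⟨e, he⟩ := hUH.extend_embedding (fg_of_fin (Fin n)) f g
  have hxe : x = e ∘ (fun a => ((0, a) : C)) := by
    funext a
    exact DFunLike.congr_fun he a
  have inj : ∀ i, Function.Injective (fun a => ((i, a) : C)) := fun i a b h => congrArg Prod.snd h
  refine ⟨fun i => e ∘ (fun a => ((i.castSucc, a) : C)), fun i => e.injective.comp (inj _),
    fun i => ?_, fun i j h => ?_⟩
  · have : ERel C n hn (fun a => ((0, a) : C)) (fun a => ((i.castSucc, a) : C)) := by
      rw [ERel_mkStr]
      exact ⟨inj _, inj _, Or.inr ⟨hn, (hM n hn).2.2.1 x hx⟩⟩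
    rw [← ERel_embed e, ← hxe] at this
    exact this
  · rw [Set.range_comp, Set.range_comp] at h
    have h := e.injective.image_injective h
    have : ((i.castSucc, ⟨0, hn⟩) : C) ∈ Set.range (fun a : Fin n => ((j.castSucc, a) : C)) := by
      rw [← h]; exact ⟨_, rfl⟩
    obtain ⟨a, ha⟩ := this
    exact (Fin.castSucc_injective _ (congrArg Prod.fst ha)).symm

/-- in the Fraïssé limit `M₀` of `K₀`, for every `n ≥ 1` the equivalence
relation induced by `E_n` on `n`-element subsets has infinitely many classes, and each
class is infinite (contains infinitely many distinct `n`-element subsets). -/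
theorem M0_classes_infinite (M₀ : Type) [L₀.Structure M₀] [Countable M₀]
    (hUH : L₀.IsUltrahomogeneous M₀) (hage : L₀.age M₀ = K₀) :
    ∀ (n : ℕ) (hn : 0 < n),
      (∃ f : ℕ → (Fin n → M₀), (∀ i, Function.Injective (f i)) ∧
          ∀ i j, i ≠ j → ¬ ERel M₀ n hn (f i) (f j)) ∧
      (∀ x : Fin n → M₀, Function.Injective x →
        ∃ g : ℕ → (Fin n → M₀), (∀ i, Function.Injective (g i)) ∧
          (∀ i, ERel M₀ n hn x (g i)) ∧
          ∀ i j, i ≠ j → Set.range (g i) ≠ Set.range (g j)) := by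
  intro n hn
  have hM := isK0_of_age M₀ hage n hn
  obtain ⟨h1, h2, h3, h4, h5⟩ := hM
  constructor
  · let s : Setoid {x : Fin n → M₀ // Function.Injective x} :=
      { r := fun x y => ERel M₀ n hn x.1 y.1
        iseqv := ⟨fun x => h3 _ x.2, fun h => h4 _ _ h, fun h h' => h5 _ _ _ h h'⟩ }
    have : Infinite (Quotient s) := by
      apply inf_of
      intro N
      obtain ⟨f, hf, hf'⟩ := part1 M₀ hage n hn N
      exact ⟨fun i => Quotient.mk s ⟨f i, hf i⟩, fun i j h => hf' i j (Quotient.exact h)⟩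
    let φ := Infinite.natEmbedding (Quotient s)
    refine ⟨fun i => (φ i).out.1, fun i => (φ i).out.2, fun i j hij h => hij ?_⟩
    apply φ.injective
    rw [← Quotient.out_eq (φ i), ← Quotient.out_eq (φ j)]
    exact Quotient.sound h
  · intro x hx
    let A : Set (Set M₀) := {S | ∃ g : Fin n → M₀, Function.Injective g ∧ ERel M₀ n hn x g ∧
      Set.range g = S}
    have : Infinite A := by
      apply inf_of
      intro N
      obtain ⟨f, hf, hf', hf2⟩ := part2 M₀ hUH hage n hn x hx N
      exact ⟨fun i => ⟨Set.range (f i), f i, hf i, hf' i, rfl⟩,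
        fun i j h => hf2 i j (congrArg Subtype.val h)⟩
    let φ := Infinite.natEmbedding A
    choose g hg hg' hg2 using fun i => (φ i).2
    refine ⟨g, hg, hg', fun i j hij h => hij (φ.injective (Subtype.ext ?_))⟩
    rw [← hg2 i, ← hg2 j, h]
end

section
/- M₀ satisfies Hrushovski's extension property: for every finite family f₁, …, f_k of isomorphisms between finite substructures of M₀, there exists a finite substructure F of M₀ containing the domains and ranges of all the f_i such that each f_i extends to an automorphism of F. -/
open FirstOrder Language Structure CategoryTheory

/-! ### Building maps of `L₀`-structures -/

theorem relMap_iff_of_eRel {C D : Type*} [L₀.Structure C] [L₀.Structure D] (φ : C → D)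
    (h : ∀ (n : ℕ) (hn : 0 < n) (x y : Fin n → C),
      ERel D n hn (φ ∘ x) (φ ∘ y) ↔ ERel C n hn x y)
    {k : ℕ} (r : L₀.Relations k) (v : Fin k → C) :
    Structure.RelMap r (φ ∘ v) ↔ Structure.RelMap r v := by
  obtain ⟨n, hn, rfl⟩ := r
  have key := h n hn (fun i => v (Fin.castAdd n i)) (fun i => v (Fin.natAdd n i))
  unfold ERel at key
  have e1 : Fin.append (fun i => v (Fin.castAdd n i)) (fun i => v (Fin.natAdd n i)) = v :=
    Fin.append_castAdd_natAdd
  have e2 : Fin.append (φ ∘ fun i => v (Fin.castAdd n i)) (φ ∘ fun i => v (Fin.natAdd n i))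
      = φ ∘ v := Fin.append_castAdd_natAdd (f := φ ∘ v)
  rw [e1, e2] at key
  exact key

def mkEmb {C D : Type*} [L₀.Structure C] [L₀.Structure D] (φ : C → D)
    (hφ : Function.Injective φ)
    (h : ∀ (n : ℕ) (hn : 0 < n) (x y : Fin n → C),
      ERel D n hn (φ ∘ x) (φ ∘ y) ↔ ERel C n hn x y) : C ↪[L₀] D where
  toFun := φ
  inj' := hφ
  map_fun' := fun f => Empty.elim f
  map_rel' := fun r v => relMap_iff_of_eRel φ h r v

def mkEqv {C D : Type*} [L₀.Structure C] [L₀.Structure D] (φ : C ≃ D)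
    (h : ∀ (n : ℕ) (hn : 0 < n) (x y : Fin n → C),
      ERel D n hn (φ ∘ x) (φ ∘ y) ↔ ERel C n hn x y) : C ≃[L₀] D where
  toEquiv := φ
  map_fun' := fun f => Empty.elim f
  map_rel' := fun r v => relMap_iff_of_eRel φ h r v

theorem eRel_comp_of_rel {C D : Type*} [L₀.Structure C] [L₀.Structure D] (φ : C → D)
    (h : ∀ {k : ℕ} (r : L₀.Relations k) (v : Fin k → C),
      Structure.RelMap r (φ ∘ v) ↔ Structure.RelMap r v)
    (n : ℕ) (hn : 0 < n) (x y : Fin n → C) :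
    ERel D n hn (φ ∘ x) (φ ∘ y) ↔ ERel C n hn x y := by
  unfold ERel
  rw [← h]
  have : Fin.append (φ ∘ x) (φ ∘ y) = φ ∘ Fin.append x y := by
    funext i
    refine Fin.addCases (fun i => ?_) (fun i => ?_) i
    · simp
    · rw [Function.comp_apply, Fin.append_right, Fin.append_right, Function.comp_apply]
  rw [this]

/-! ### Structures from colourings -/

open Classical in
/-- The structure in which sets are equivalent if they have the same colour. -/
@[reducible] noncomputable def colStr {C V : Type*} (col : Finset C → V) : L₀.Structure C where
  funMap := fun f => Empty.elim f
  RelMap := fun r v =>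
    Function.Injective (fun i : Fin r.1 => v (Fin.cast r.2.2.symm (Fin.castAdd r.1 i))) ∧
    Function.Injective (fun i : Fin r.1 => v (Fin.cast r.2.2.symm (Fin.natAdd r.1 i))) ∧
    col (Finset.univ.image (fun i : Fin r.1 => v (Fin.cast r.2.2.symm (Fin.castAdd r.1 i)))) =
    col (Finset.univ.image (fun i : Fin r.1 => v (Fin.cast r.2.2.symm (Fin.natAdd r.1 i))))

theorem colStr_eRel {C V : Type*} [inst : DecidableEq C] (col : Finset C → V) (n : ℕ) (hn : 0 < n)
    (x y : Fin n → C) :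
    @ERel C (colStr col) n hn x y ↔ Function.Injective x ∧ Function.Injective y ∧
      col (Finset.univ.image x) = col (Finset.univ.image y) := by
  have hinst : inst = fun a b => Classical.propDecidable (a = b) := Subsingleton.elim _ _
  subst hinst
  classical
  have e1 : (fun i : Fin n => Fin.append x y (Fin.cast rfl (Fin.castAdd n i))) = x := by
    funext i; simp
  have e2 : (fun i : Fin n => Fin.append x y (Fin.cast rfl (Fin.natAdd n i))) = y := by
    funext i; exact Fin.append_right x y i
  change (Function.Injective
      (fun i : Fin n => Fin.append x y (Fin.cast rfl (Fin.castAdd n i))) ∧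
    Function.Injective (fun i : Fin n => Fin.append x y (Fin.cast rfl (Fin.natAdd n i))) ∧
    col (Finset.univ.image
      (fun i : Fin n => Fin.append x y (Fin.cast rfl (Fin.castAdd n i)))) =
    col (Finset.univ.image
      (fun i : Fin n => Fin.append x y (Fin.cast rfl (Fin.natAdd n i))))) ↔ _
  rw [e1, e2]

open Classical in
theorem image_perm {C : Type*} {n : ℕ} (x : Fin n → C) (σ : Equiv.Perm (Fin n)) :
    Finset.univ.image (x ∘ σ) = Finset.univ.image x := by
  ext c
  simp only [Finset.mem_image, Finset.mem_univ, true_and, Function.comp]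
  exact ⟨fun ⟨i, h⟩ => ⟨_, h⟩, fun ⟨i, h⟩ => ⟨σ.symm i, by simpa using h⟩⟩

theorem colStr_isK0 {C V : Type*} (col : Finset C → V) : @IsK0Struct C (colStr col) := by
  classical
  intro n hn
  simp only [colStr_eRel]
  refine ⟨fun x y h => ⟨h.1, h.2.1⟩, ?_, fun x h => ⟨h, h, by trivial⟩,
    fun x y h => ⟨h.2.1, h.1, h.2.2.symm⟩,
    fun x y z h h' => ⟨h.1, h'.2.1, h.2.2.trans h'.2.2⟩⟩
  intro x y σ τ h
  refine ⟨h.1.comp σ.injective, h.2.1.comp τ.injective, ?_⟩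
  rw [image_perm, image_perm]
  exact h.2.2

/-! ### The equivalence relation on finite sets -/

open Classical in
theorem exists_perm_of_image {C : Type*} {n : ℕ} {x y : Fin n → C}
    (_ : Function.Injective x) (hy : Function.Injective y)
    (h : Finset.univ.image x = Finset.univ.image y) : ∃ σ : Equiv.Perm (Fin n), y = x ∘ σ := by
  have h1 : ∀ i, ∃ j, x j = y i := by
    intro i
    have : y i ∈ Finset.univ.image x := by rw [h]; simp
    simpa using this
  choose s hs using h1
  have hinj : Function.Injective s := by
    intro i j hij
    apply hy
    rw [← hs, ← hs, hij]
  refine ⟨Equiv.ofBijective s (Finite.injective_iff_bijective.1 hinj), ?_⟩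
  funext i
  simp [hs]

open Classical in
def setRel (C : Type*) [L₀.Structure C] (X Y : Finset C) : Prop :=
  X = Y ∨ ∃ (n : ℕ) (hn : 0 < n) (x y : Fin n → C), ERel C n hn x y ∧
    Finset.univ.image x = X ∧ Finset.univ.image y = Y

open Classical in
theorem card_image_fin {C : Type*} {n : ℕ} {x : Fin n → C} (hx : Function.Injective x) :
    (Finset.univ.image x).card = n := by
  rw [Finset.card_image_of_injective _ hx]; simp

open Classical in
theorem setRel_trans {C : Type*} [L₀.Structure C] (hC : IsK0Struct C) {X Y Z : Finset C}
    (h1 : setRel C X Y) (h2 : setRel C Y Z) : setRel C X Z := by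
  rcases h1 with rfl | ⟨n, hn, x, y, hxy, rfl, hY⟩
  · exact h2
  rcases h2 with rfl | ⟨m, hm, y', z, hyz, hY', rfl⟩
  · exact Or.inr ⟨n, hn, x, y, hxy, rfl, hY⟩
  have hy := ((hC n hn).1 _ _ hxy).2
  have hy' := ((hC m hm).1 _ _ hyz).1
  have : n = m := by rw [← card_image_fin hy, ← card_image_fin hy', hY, hY']
  subst this
  obtain ⟨σ, rfl⟩ := exists_perm_of_image hy hy' (hY.trans hY'.symm)
  have := (hC n hn).2.1 x y 1 σ hxy
  exact Or.inr ⟨n, hn, x, z, (hC n hn).2.2.2.2 _ _ _ this hyz, rfl, rfl⟩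

open Classical in
def setRelSetoid {C : Type*} [L₀.Structure C] (hC : IsK0Struct C) : Setoid (Finset C) where
  r := setRel C
  iseqv := ⟨fun _ => Or.inl rfl, by
    rintro X Y (rfl | ⟨n, hn, x, y, hxy, hX, hY⟩)
    · exact Or.inl rfl
    · exact Or.inr ⟨n, hn, y, x, (hC n hn).2.2.2.1 _ _ hxy, hY, hX⟩, setRel_trans hC⟩

open Classical in
theorem eRel_iff_setRel {C : Type*} [L₀.Structure C] (hC : IsK0Struct C) {n : ℕ} (hn : 0 < n)
    {x y : Fin n → C} (hx : Function.Injective x) (hy : Function.Injective y) :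
    ERel C n hn x y ↔ setRel C (Finset.univ.image x) (Finset.univ.image y) := by
  constructor
  · exact fun h => Or.inr ⟨n, hn, x, y, h, rfl, rfl⟩
  · rintro (h | ⟨m, hm, x', y', hxy, hX, hY⟩)
    · obtain ⟨σ, rfl⟩ := exists_perm_of_image hx hy h
      exact (hC n hn).2.1 x x 1 σ ((hC n hn).2.2.1 x hx)
    · obtain ⟨hx', hy'⟩ := (hC m hm).1 _ _ hxy
      have : m = n := by rw [← card_image_fin hx, ← card_image_fin hx', hX]
      subst this
      obtain ⟨σ, rfl⟩ := exists_perm_of_image hx' hx hX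
      obtain ⟨τ, rfl⟩ := exists_perm_of_image hy' hy hY
      exact (hC m hm).2.1 _ _ σ τ hxy

open Classical in
theorem setRel_map {A P : Type*} [L₀.Structure A] {u v : P → A}
    (hu : Function.Injective u)
    (h : ∀ (n : ℕ) (hn : 0 < n) (x y : Fin n → P),
      ERel A n hn (u ∘ x) (u ∘ y) → ERel A n hn (v ∘ x) (v ∘ y)) {X Y : Finset P}
    (hr : setRel A (X.image u) (Y.image u)) : setRel A (X.image v) (Y.image v) := by
  have lift : ∀ (n : ℕ) (x : Fin n → A) (X : Finset P), Finset.univ.image x = X.image u →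
      ∃ x0 : Fin n → P, x = u ∘ x0 ∧ Finset.univ.image x0 = X := by
    intro n x X hX
    have : ∀ i, ∃ s, u s = x i := by
      intro i
      have : x i ∈ X.image u := by rw [← hX]; simp
      obtain ⟨s, _, hs⟩ := Finset.mem_image.1 this
      exact ⟨s, hs⟩
    choose x0 hx0 using this
    obtain rfl : x = u ∘ x0 := funext fun i => (hx0 i).symm
    refine ⟨x0, rfl, ?_⟩
    apply Finset.image_injective hu
    rw [← hX, Finset.image_image]
  rcases hr with hr | ⟨n, hn, x, y, hxy, hX, hY⟩
  · rw [Finset.image_injective hu hr]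
    exact Or.inl rfl
  · obtain ⟨x, rfl, rfl⟩ := lift n x X hX
    obtain ⟨y, rfl, rfl⟩ := lift n y Y hY
    refine Or.inr ⟨n, hn, _, _, h n hn _ _ hxy, ?_, ?_⟩ <;> rw [Finset.image_image]

theorem exists_perm_extend {I Q : Type*} [Finite Q] (u v : I → Q)
    (h : ∀ i j, u i = u j ↔ v i = v j) : ∃ σ : Equiv.Perm Q, ∀ i, σ (u i) = v i := by
  classical
  have := Fintype.ofFinite Q
  let f : Q → Q := fun q => if hq : ∃ i, u i = q then v hq.choose else q
  have hf : ∀ i, f (u i) = v i := by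
    intro i
    have hq : ∃ j, u j = u i := ⟨i, rfl⟩
    simp only [f, dif_pos hq]
    exact (h _ _).1 hq.choose_spec
  have hinj : Set.InjOn f (Set.range u) := by
    rintro _ ⟨i, rfl⟩ _ ⟨j, rfl⟩ hij
    rw [hf, hf] at hij
    exact (h _ _).2 hij
  obtain ⟨g, hg⟩ := Set.MapsTo.exists_equiv_extend_of_card_eq (t := Finset.univ)
    (by simp) (fun x _ => by simp) hinj
  refine ⟨Equiv.ofBijective (fun q => (g q : Q)) (Finite.injective_iff_bijective.1 ?_), ?_⟩
  · exact Subtype.val_injective.comp g.injective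
  · intro i
    rw [← hf]
    exact hg _ ⟨i, rfl⟩

/-! ### The combinatorial construction -/

open Classical in
noncomputable def bcol {A V : Type*} [AddCommGroup V] (Z : Finset (A × (Finset A → V))) : V :=
  if Set.InjOn Prod.fst (Z : Set (A × (Finset A → V))) then
    ∑ b ∈ Z, b.2 (Z.image Prod.fst) else 0

noncomputable def bmap {A V : Type*} [AddCommGroup V] (π : Equiv.Perm A) (σ : V ≃+ V)
    (δ : A → Finset A → V) (b : A × (Finset A → V)) : A × (Finset A → V) :=
  (π b.1, fun Y => σ (b.2 (Y.map π.symm.toEmbedding)) + δ b.1 (Y.map π.symm.toEmbedding))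

theorem map_symm_map {A : Type*} (π : Equiv.Perm A) (X : Finset A) :
    (X.map π.toEmbedding).map π.symm.toEmbedding = X := by
  rw [Finset.map_map]; ext; simp

theorem bmap_injective {A V : Type*} [AddCommGroup V] (π : Equiv.Perm A) (σ : V ≃+ V)
    (δ : A → Finset A → V) : Function.Injective (bmap π σ δ) := by
  rintro ⟨x, χ⟩ ⟨y, ψ⟩ h
  simp only [bmap, Prod.mk.injEq, EmbeddingLike.apply_eq_iff_eq] at h
  obtain ⟨rfl, h⟩ := h
  congr 1
  funext X
  have := congrFun h (X.map π.toEmbedding)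
  simpa [map_symm_map] using this

theorem bcol_bmap {A V : Type*} [AddCommGroup V] [DecidableEq (A × (Finset A → V))] (π : Equiv.Perm A) (σ : V ≃+ V)
    (δ : A → Finset A → V) (hδ : ∀ X, ∑ x ∈ X, δ x X = 0) (Z : Finset (A × (Finset A → V))) :
    bcol (Z.image (bmap π σ δ)) = σ (bcol Z) := by
  have hiff : Set.InjOn Prod.fst
      ((Z.image (bmap π σ δ) : Finset _) : Set (A × (Finset A → V))) ↔
      Set.InjOn Prod.fst (Z : Set (A × (Finset A → V))) := by
    constructor
    · intro h a ha b hb hab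
      apply bmap_injective π σ δ
      apply h (by simpa using ⟨_, _, ha, rfl⟩) (by simpa using ⟨_, _, hb, rfl⟩)
      simp [bmap, hab]
    · intro h a ha b hb hab
      obtain ⟨a, ha', rfl⟩ := Finset.mem_image.1 (Finset.mem_coe.1 ha)
      obtain ⟨b, hb', rfl⟩ := Finset.mem_image.1 (Finset.mem_coe.1 hb)
      rw [h (Finset.mem_coe.2 ha') (Finset.mem_coe.2 hb') (π.injective hab)]
  classical
  unfold bcol
  by_cases hZ : Set.InjOn Prod.fst (Z : Set (A × (Finset A → V)))
  · rw [if_pos hZ, if_pos (hiff.2 hZ)]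
    rw [Finset.sum_image (fun a _ b _ h => bmap_injective π σ δ h)]
    have himg : (Z.image (bmap π σ δ)).image Prod.fst
        = (Z.image Prod.fst).map π.toEmbedding := by
      rw [Finset.map_eq_image, Finset.image_image, Finset.image_image]
      rfl
    rw [himg]
    simp only [bmap, map_symm_map]
    rw [Finset.sum_add_distrib, map_sum]
    have : ∑ b ∈ Z, δ b.1 (Z.image Prod.fst) = 0 := by
      rw [← hδ (Z.image Prod.fst), Finset.sum_image hZ]
    rw [this, add_zero]
  · rw [if_neg hZ, if_neg (fun h => hZ (hiff.1 h)), map_zero]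

theorem core (A : Type) [Finite A] [L₀.Structure A] (hA : IsK0Struct A) :
    ∃ (B : Type) (_ : L₀.Structure B), Finite B ∧ IsK0Struct B ∧ ∃ ι : A ↪[L₀] B,
      ∀ (P : Type) (u v : P → A), Function.Injective u → Function.Injective v →
        (∀ (n : ℕ) (hn : 0 < n) (x y : Fin n → P),
          ERel A n hn (u ∘ x) (u ∘ y) ↔ ERel A n hn (v ∘ x) (v ∘ y)) →
        ∃ g : B ≃[L₀] B, ∀ s, g (ι (u s)) = ι (v s) := by
  classical
  have := Fintype.ofFinite A
  let Q := Quotient (setRelSetoid hA)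
  let c : Finset A → Q := fun X => Quotient.mk _ X
  have hc : ∀ X Y, c X = c Y ↔ setRel A X Y := fun X Y => Quotient.eq
  have hQ : Finite Q := inferInstance
  let V := Q →₀ ZMod 2
  have hV : Finite V := by
    have := Fintype.ofFinite Q
    exact inferInstanceAs (Finite (Q →₀ ZMod 2))
  let e : Q → V := fun q => Finsupp.single q 1
  have he : Function.Injective e := Finsupp.single_left_injective one_ne_zero
  let B := A × (Finset A → V)
  let m : A → Finset A → V := fun x X =>
    if h : X.Nonempty then (if x = h.choose then e (c X) else 0) else 0
  have hm : ∀ X : Finset A, X.Nonempty → ∑ x ∈ X, m x X = e (c X) := by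
    intro X hX
    simp only [m, dif_pos hX]
    rw [Finset.sum_ite_eq' X, if_pos hX.choose_spec]
  let i0 : A → B := fun x => (x, m x)
  have hi0 : Function.Injective i0 := fun x y h => congrArg Prod.fst h
  have hcol : ∀ X : Finset A, X.Nonempty → bcol (X.image i0) = e (c X) := by
    intro X hX
    have h1 : Set.InjOn Prod.fst ((X.image i0 : Finset B) : Set B) := by
      intro a ha b hb hab
      obtain ⟨a, ha', rfl⟩ := Finset.mem_image.1 (Finset.mem_coe.1 ha)
      obtain ⟨b, hb', rfl⟩ := Finset.mem_image.1 (Finset.mem_coe.1 hb)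
      exact congrArg i0 hab
    have h2 : (X.image i0).image Prod.fst = X := by
      rw [Finset.image_image]
      exact Finset.image_id
    unfold bcol
    rw [if_pos h1, h2, Finset.sum_image (fun a _ b _ h => hi0 h)]
    exact hm X hX
  refine ⟨B, colStr bcol, inferInstanceAs (Finite (A × (Finset A → V))), colStr_isK0 _, ?_⟩
  let _ : L₀.Structure B := colStr bcol
  refine ⟨mkEmb i0 hi0 ?_, ?_⟩
  · intro n hn x y
    have hne : ∀ z : Fin n → A, (Finset.univ.image z).Nonempty := fun z =>
      ⟨z ⟨0, hn⟩, by simp⟩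
    have hE := colStr_eRel (bcol (A := A) (V := V)) n hn (i0 ∘ x) (i0 ∘ y)
    refine hE.trans ?_
    rw [← Finset.image_image, ← Finset.image_image, hcol _ (hne x), hcol _ (hne y),
      he.eq_iff, hc]
    constructor
    · rintro ⟨hx, hy, h⟩
      exact (eRel_iff_setRel hA hn hx.of_comp hy.of_comp).2 h
    · intro h
      obtain ⟨hx, hy⟩ := (hA n hn).1 _ _ h
      exact ⟨hi0.comp hx, hi0.comp hy, (eRel_iff_setRel hA hn hx hy).1 h⟩
  · intro P u v hu hv huv
    obtain ⟨π, hπ⟩ := exists_perm_extend u v (fun i j => by rw [hu.eq_iff, hv.eq_iff])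
    obtain ⟨τ, hτ⟩ := exists_perm_extend (fun X : Finset P => c (X.image u))
      (fun X : Finset P => c (X.image v)) (fun X Y => by
        rw [hc, hc]
        exact ⟨setRel_map hu (fun n hn x y => (huv n hn x y).1),
          setRel_map hv (fun n hn x y => (huv n hn x y).2)⟩)
    let σ : V ≃+ V := Finsupp.domCongr τ
    have hσ : ∀ q, σ (e q) = e (τ q) := fun q => by
      simp [σ, e, Finsupp.domCongr, Finsupp.equivMapDomain_single]
    let d0 : A → Finset A → V := fun x X => m (π x) (X.map π.toEmbedding) - σ (m x X)
    let δ : A → Finset A → V := fun x X =>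
      if h : ∃ y ∈ X, y ∉ Set.range u then
        (if x = h.choose then - ∑ z ∈ X.erase h.choose, d0 z X else d0 x X)
      else d0 x X
    have hδ : ∀ X, ∑ x ∈ X, δ x X = 0 := by
      intro X
      by_cases h : ∃ y ∈ X, y ∉ Set.range u
      · simp only [δ, dif_pos h]
        rw [← Finset.add_sum_erase X _ h.choose_spec.1, if_pos rfl]
        rw [Finset.sum_congr rfl (fun z hz => if_neg (Finset.ne_of_mem_erase hz))]
        exact neg_add_cancel _
      · simp only [δ, dif_neg h]
        push Not at h
        rcases X.eq_empty_or_nonempty with rfl | hX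
        · simp
        obtain ⟨X, rfl⟩ : ∃ Y : Finset P, Y.image u = X := by
          refine ⟨X.preimage u hu.injOn, ?_⟩
          rw [Finset.image_preimage]
          exact Finset.filter_true_of_mem h
        have hmap : (X.image u).map π.toEmbedding = X.image v := by
          rw [Finset.map_eq_image, Finset.image_image]
          exact Finset.image_congr (fun s _ => hπ s)
        simp only [d0]
        rw [Finset.sum_sub_distrib, ← map_sum, hm _ hX, hσ, hτ X, sub_eq_zero, ← hmap,
          ← hm _ (hX.map), Finset.sum_map]
        rfl
    have hδu : ∀ s X, δ (u s) X = d0 (u s) X := by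
      intro s X
      simp only [δ]
      split_ifs with h h'
      · exact absurd ⟨s, h'⟩ h.choose_spec.2
      · rfl
      · rfl
    have hfin : Finite B := inferInstanceAs (Finite (A × (Finset A → V)))
    let g : B ≃ B := Equiv.ofBijective (bmap π σ δ)
      (Finite.injective_iff_bijective.1 (bmap_injective π σ δ))
    refine ⟨mkEqv g ?_, ?_⟩
    · intro n hn x y
      have hE := colStr_eRel (bcol (A := A) (V := V)) n hn (g ∘ x) (g ∘ y)
      have hE' := colStr_eRel (bcol (A := A) (V := V)) n hn x y
      refine hE.trans (Iff.trans ?_ hE'.symm)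
      rw [← Finset.image_image, ← Finset.image_image, g.injective.of_comp_iff,
        g.injective.of_comp_iff]
      have hg : ∀ Z : Finset B, bcol (Z.image g) = σ (bcol Z) := bcol_bmap π σ δ hδ
      rw [hg, hg, σ.injective.eq_iff]
    · intro s
      change bmap π σ δ (u s, m (u s)) = (v s, m (v s))
      simp only [bmap, hδu, d0, hπ]
      congr 1
      funext Y
      rw [add_sub_cancel, Finset.map_map]
      congr 1
      ext; simp

/-- `M₀` satisfies Hrushovski's extension property: every finite family of
isomorphisms between finite substructures extends, inside some finite substructure `F`
containing all domains and ranges, to automorphisms of `F`. -/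
theorem M0_hrushovski_property (M₀ : Type) [L₀.Structure M₀] [Countable M₀]
    (hUH : L₀.IsUltrahomogeneous M₀) (hage : L₀.age M₀ = K₀) :
    ∀ (k : ℕ) (S T : Fin k → L₀.Substructure M₀),
      (∀ i, Set.Finite (S i : Set M₀)) → (∀ i, Set.Finite (T i : Set M₀)) →
      ∀ f : (i : Fin k) → S i ≃[L₀] T i,
        ∃ F : L₀.Substructure M₀, Set.Finite (F : Set M₀) ∧
          ∃ (hS : ∀ i, S i ≤ F) (_ : ∀ i, T i ≤ F) (g : Fin k → (F ≃[L₀] F)),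
            ∀ (i : Fin k) (x : M₀) (hx : x ∈ S i),
              ((g i ⟨x, hS i hx⟩ : F) : M₀) = ((f i ⟨x, hx⟩ : T i) : M₀) := by
  intro k S T hS hT f
  let A : L₀.Substructure M₀ :=
    { carrier := {x | ∃ i, x ∈ S i ∨ x ∈ T i}
      fun_mem := fun f => Empty.elim f }
  have hAfin : Finite A := by
    have : Set.Finite (⋃ i, ((S i : Set M₀) ∪ (T i : Set M₀))) :=
      Set.finite_iUnion (fun i => (hS i).union (hT i))
    refine Set.Finite.to_subtype (this.subset ?_)
    rintro x ⟨i, hx⟩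
    exact Set.mem_iUnion.2 ⟨i, hx⟩
  have hAfg : A.FG := Substructure.FG.of_finite
  have hAK : Bundled.mk A ∈ K₀ := hage ▸ age.fg_substructure hAfg
  obtain ⟨B, iB, hBfin, hBK, ι, hι⟩ := core A hAK.2
  have hBage : (Bundled.mk B : Bundled L₀.Structure) ∈ L₀.age M₀ := by
    rw [hage]
    exact ⟨hBfin, hBK⟩
  have hBne : Nonempty (B ↪[L₀] M₀) := hBage.2
  obtain ⟨j, hj⟩ := hUH.extend_embedding (S := A) (T := B) Structure.FG.of_finite A.subtype ι
  have hj' : ∀ a : A, j (ι a) = (a : M₀) := fun a => (DFunLike.congr_fun hj a).symm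
  have hSA : ∀ i, S i ≤ A := fun i x hx => ⟨i, Or.inl hx⟩
  have hTA : ∀ i, T i ≤ A := fun i x hx => ⟨i, Or.inr hx⟩
  have hAF : A ≤ j.toHom.range := fun x hx => ⟨ι ⟨x, hx⟩, hj' ⟨x, hx⟩⟩
  have hg : ∀ i, ∃ g : B ≃[L₀] B, ∀ s : S i,
      g (ι (⟨s, hSA i s.2⟩ : A)) = ι (⟨f i s, hTA i (f i s).2⟩ : A) := by
    intro i
    refine hι (S i) (fun s => ⟨s, hSA i s.2⟩) (fun s => ⟨f i s, hTA i (f i s).2⟩) ?_ ?_ ?_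
    · intro s t h
      exact Subtype.ext (congrArg (fun a : A => (a : M₀)) h)
    · intro s t h
      exact (f i).injective (Subtype.ext (congrArg (fun a : A => (a : M₀)) h))
    · intro n hn x y
      rw [← eRel_comp_of_rel (A.subtype : A → M₀) (fun r v => A.subtype.map_rel r v),
        ← eRel_comp_of_rel (A.subtype : A → M₀) (fun r v => A.subtype.map_rel r v)]
      have h1 := eRel_comp_of_rel ((S i).subtype : S i → M₀)
        (fun r v => (S i).subtype.map_rel r v) n hn x y
      have h2 := eRel_comp_of_rel ((T i).subtype : T i → M₀)
        (fun r v => (T i).subtype.map_rel r v) n hn (f i ∘ x) (f i ∘ y)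
      have h3 := eRel_comp_of_rel (f i : S i → T i)
        (fun r v => (f i).map_rel r v) n hn x y
      exact h1.trans (h3.symm.trans h2.symm)
  choose g hg using hg
  refine ⟨j.toHom.range, Set.finite_range j, fun i => (hSA i).trans hAF,
    fun i => (hTA i).trans hAF, fun i =>
      j.equivRange.comp ((g i).comp j.equivRange.symm), ?_⟩
  intro i x hx
  have hx' : j.equivRange.symm ⟨x, hAF (hSA i hx)⟩ = ι ⟨x, hSA i hx⟩ := by
    apply j.equivRange.injective
    rw [FirstOrder.Language.Equiv.apply_symm_apply]
    exact Subtype.ext (hj' ⟨x, hSA i hx⟩).symm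
  change ((j.equivRange (g i (j.equivRange.symm ⟨x, hAF (hSA i hx)⟩)) : j.toHom.range) : M₀) = _
  rw [hx', hg i ⟨x, hx⟩]
  exact hj' _
end

section
/- K_P is a Fraïssé class, so it has a Fraïssé limit M (a countable ultrahomogeneous L_P-structure with age K_P), and the first-order theory of M is ℵ₀-categorical. -/
open FirstOrder Language Structure CategoryTheory

/-- The language `L_P`: a `2n`-ary symbol `E_n` for each `n ≥ 1` and a `2n`-ary symbol
`<_n` for each `n ∈ P`. -/
def LP (P : Set ℕ) : FirstOrder.Language where
  Functions := fun _ => Empty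
  Relations := fun k => {n : ℕ // 0 < n ∧ k = n + n} ⊕ {n : ℕ // n ∈ P ∧ k = n + n}

/-- The symbol `E_n` of `L_P`. -/
def EsymbP (P : Set ℕ) (n : ℕ) (hn : 0 < n) : (LP P).Relations (n + n) :=
  Sum.inl ⟨n, hn, rfl⟩

/-- The symbol `<_n` of `L_P`. -/
def LTsymbP (P : Set ℕ) (n : ℕ) (hn : n ∈ P) : (LP P).Relations (n + n) :=
  Sum.inr ⟨n, hn, rfl⟩

/-- `E_n(x̄, ȳ)` in an `L_P`-structure. -/
def ERelP (P : Set ℕ) (M : Type*) [i : (LP P).Structure M] (n : ℕ) (hn : 0 < n)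
    (x y : Fin n → M) : Prop :=
  @Structure.RelMap (LP P) M i (n + n) (EsymbP P n hn) (Fin.append x y)

/-- `x̄ <_n ȳ` in an `L_P`-structure. -/
def LTRelP (P : Set ℕ) (M : Type*) [i : (LP P).Structure M] (n : ℕ) (hn : n ∈ P)
    (x y : Fin n → M) : Prop :=
  @Structure.RelMap (LP P) M i (n + n) (LTsymbP P n hn) (Fin.append x y)

/-- The defining conditions for membership in `K_P`: the `{E_n}`-part satisfies the
`K₀`-conditions, and for `n ∈ P` the relation `<_n` holds only on injective tuples, is
`E_n`-invariant, and induces a strict linear order on `E_n`-classes. -/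
def IsKPStruct (P : Set ℕ) (C : Type*) [(LP P).Structure C] : Prop :=
  (∀ (n : ℕ) (hn : 0 < n),
    (∀ x y : Fin n → C, ERelP P C n hn x y → Function.Injective x ∧ Function.Injective y) ∧
    (∀ (x y : Fin n → C) (σ τ : Equiv.Perm (Fin n)),
        ERelP P C n hn x y → ERelP P C n hn (x ∘ σ) (y ∘ τ)) ∧
    (∀ x : Fin n → C, Function.Injective x → ERelP P C n hn x x) ∧
    (∀ x y : Fin n → C, ERelP P C n hn x y → ERelP P C n hn y x) ∧
    (∀ x y z : Fin n → C, ERelP P C n hn x y → ERelP P C n hn y z → ERelP P C n hn x z)) ∧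
  (∀ (n : ℕ) (hn : n ∈ P) (hn0 : 0 < n),
    (∀ x y : Fin n → C, LTRelP P C n hn x y → Function.Injective x ∧ Function.Injective y) ∧
    (∀ x x' y y' : Fin n → C, ERelP P C n hn0 x x' → ERelP P C n hn0 y y' →
        LTRelP P C n hn x y → LTRelP P C n hn x' y') ∧
    (∀ x y : Fin n → C, LTRelP P C n hn x y → ¬ ERelP P C n hn0 x y) ∧
    (∀ x y z : Fin n → C, LTRelP P C n hn x y → LTRelP P C n hn y z → LTRelP P C n hn x z) ∧
    (∀ x y : Fin n → C, Function.Injective x → Function.Injective y →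
        ¬ ERelP P C n hn0 x y → LTRelP P C n hn x y ∨ LTRelP P C n hn y x))

/-- The class `K_P` of finite `L_P`-structures as above. -/
def KP (P : Set ℕ) : Set (Bundled (LP P).Structure) := {C | Finite C ∧ IsKPStruct P C}

namespace KPAux

open FirstOrder.Language

universe u v w w'

instance instRelationalLP (P : Set ℕ) : (LP P).IsRelational :=
  fun _ => inferInstanceAs (IsEmpty Empty)

instance instFiniteRelLP (P : Set ℕ) (k : ℕ) : Finite ((LP P).Relations k) := by
  have h1 : Subsingleton {n : ℕ // 0 < n ∧ k = n + n} :=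
    ⟨fun a b => Subtype.ext (by have := a.2.2; have := b.2.2; omega)⟩
  have h2 : Subsingleton {n : ℕ // n ∈ P ∧ k = n + n} :=
    ⟨fun a b => Subtype.ext (by have := a.2.2; have := b.2.2; omega)⟩
  exact inferInstanceAs (Finite ({n : ℕ // 0 < n ∧ k = n + n} ⊕ {n : ℕ // n ∈ P ∧ k = n + n}))

/-- Finitely many formulas can be simultaneously transferred between elementarily equivalent
structures. -/
theorem transfer {L : FirstOrder.Language.{0, 0}} {M : Type u} {N : Type v} [L.Structure M]
    [L.Structure N] (h : M ≅[L] N) {X : Type w} [Finite X] {ι : Type w'} [Finite ι]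
    (φ : ι → L.Formula X) (f : X → N) :
    ∃ f' : X → M, ∀ i, (φ i).Realize f' ↔ (φ i).Realize f := by
  classical
  let ψ : ι → L.Formula X := fun i => if (φ i).Realize f then φ i else ∼(φ i)
  let S : L.Sentence := Formula.iExs X ((Formula.iInf ψ).relabel Sum.inr : L.Formula (Empty ⊕ X))
  have hN : N ⊨ S := by
    simp only [S, Sentence.Realize, Formula.realize_iExs, Formula.realize_relabel,
      Formula.realize_iInf]
    refine ⟨f, fun i => ?_⟩
    simp only [Sum.elim_comp_inr, ψ]
    split_ifs with hi
    · exact hi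
    · simpa using hi
  have hM : M ⊨ S := (h.realize_sentence S).2 hN
  simp only [S, Sentence.Realize, Formula.realize_iExs, Formula.realize_relabel,
      Formula.realize_iInf, Sum.elim_comp_inr] at hM
  obtain ⟨f', hf'⟩ := hM
  refine ⟨f', fun i => ?_⟩
  have := hf' i
  simp only [ψ] at this
  split_ifs at this with hi
  · simp [hi, this]
  · simpa [hi] using this

/-- `f` preserves and reflects all relations on `s`. -/
def REmb (P : Set ℕ) {X : Type u} {N : Type v} [(LP P).Structure X] [(LP P).Structure N]
    (s : Set X) (f : X → N) : Prop :=
  ∀ (k : ℕ) (R : (LP P).Relations k) (t : Fin k → X), (∀ i, t i ∈ s) →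
    (RelMap R (f ∘ t) ↔ RelMap R t)

theorem append_comp {n : ℕ} {X : Type u} {N : Type v} (f : X → N) (x y : Fin n → X) :
    f ∘ Fin.append x y = Fin.append (f ∘ x) (f ∘ y) := by
  ext i
  refine Fin.addCases (fun i => ?_) (fun i => ?_) i <;>
    simp only [Fin.append_left, Fin.append_right, Function.comp]

theorem REmb.E {P : Set ℕ} {X : Type u} {N : Type v} [(LP P).Structure X] [(LP P).Structure N]
    {s : Set X} {f : X → N} (h : REmb P s f) (n : ℕ) (hn : 0 < n) (x y : Fin n → X)
    (hx : ∀ i, x i ∈ s) (hy : ∀ i, y i ∈ s) :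
    ERelP P N n hn (f ∘ x) (f ∘ y) ↔ ERelP P X n hn x y := by
  unfold ERelP
  rw [← append_comp]
  refine h _ _ _ fun i => ?_
  refine Fin.addCases (fun i => ?_) (fun i => ?_) i <;>
    simp only [Fin.append_left, Fin.append_right, hx, hy]

theorem REmb.LT {P : Set ℕ} {X : Type u} {N : Type v} [(LP P).Structure X] [(LP P).Structure N]
    {s : Set X} {f : X → N} (h : REmb P s f) (n : ℕ) (hn : n ∈ P) (x y : Fin n → X)
    (hx : ∀ i, x i ∈ s) (hy : ∀ i, y i ∈ s) :
    LTRelP P N n hn (f ∘ x) (f ∘ y) ↔ LTRelP P X n hn x y := by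
  unfold LTRelP
  rw [← append_comp]
  refine h _ _ _ fun i => ?_
  refine Fin.addCases (fun i => ?_) (fun i => ?_) i <;>
    simp only [Fin.append_left, Fin.append_right, hx, hy]

theorem REmb.of_rel {P : Set ℕ} {X : Type u} {N : Type v} [(LP P).Structure X]
    [(LP P).Structure N] {s : Set X} {f : X → N}
    (hE : ∀ (n : ℕ) (hn : 0 < n) (x y : Fin n → X), (∀ i, x i ∈ s) → (∀ i, y i ∈ s) →
      (ERelP P N n hn (f ∘ x) (f ∘ y) ↔ ERelP P X n hn x y))
    (hL : ∀ (n : ℕ) (hn : n ∈ P) (x y : Fin n → X), (∀ i, x i ∈ s) → (∀ i, y i ∈ s) →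
      (LTRelP P N n hn (f ∘ x) (f ∘ y) ↔ LTRelP P X n hn x y)) : REmb P s f := by
  intro k R t ht
  rcases R with ⟨n, hn, rfl⟩ | ⟨n, hn, rfl⟩
  · have := hE n hn (fun i => t (Fin.castAdd n i)) (fun i => t (Fin.natAdd n i))
      (fun _ => ht _) (fun _ => ht _)
    unfold ERelP at this
    rwa [← append_comp, Fin.append_castAdd_natAdd] at this
  · have := hL n hn (fun i => t (Fin.castAdd n i)) (fun i => t (Fin.natAdd n i))
      (fun _ => ht _) (fun _ => ht _)
    unfold LTRelP at this
    rwa [← append_comp, Fin.append_castAdd_natAdd] at this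

/-- Relations of big arity are empty. -/
theorem arity_le {P : Set ℕ} (hP : ∀ n ∈ P, 3 ≤ n) {N : Type v} [(LP P).Structure N]
    (hN : IsKPStruct P N) {X : Type u} [Finite X] (f : X → N) {k : ℕ} (R : (LP P).Relations k)
    (t : Fin k → X) (h : RelMap R (f ∘ t)) : k ≤ 2 * Nat.card X := by
  have key : ∀ n (x : Fin n → X), Function.Injective (f ∘ x) → n ≤ Nat.card X := by
    intro n x hx
    simpa using Nat.card_le_card_of_injective x hx.of_comp
  rcases R with ⟨n, hn, rfl⟩ | ⟨n, hn, rfl⟩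
  · have h1 : ERelP P N n hn (f ∘ fun i => t (Fin.castAdd n i)) (f ∘ fun i => t (Fin.natAdd n i)) := by
      unfold ERelP
      rw [← append_comp, Fin.append_castAdd_natAdd]; exact h
    have := key _ _ ((hN.1 n hn).1 _ _ h1).1
    omega
  · have h1 : LTRelP P N n hn (f ∘ fun i => t (Fin.castAdd n i)) (f ∘ fun i => t (Fin.natAdd n i)) := by
      unfold LTRelP
      rw [← append_comp, Fin.append_castAdd_natAdd]; exact h
    have := key _ _ ((hN.2 n hn (by have := hP n hn; omega)).1 _ _ h1).1
    omega

theorem REmb.of_bdd {P : Set ℕ} (hP : ∀ n ∈ P, 3 ≤ n) {X : Type u} {N : Type v} [Finite X]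
    [(LP P).Structure X] [(LP P).Structure N] (hX : IsKPStruct P X) (hN : IsKPStruct P N)
    {s : Set X} {f : X → N}
    (h : ∀ (k : ℕ), k ≤ 2 * Nat.card X → ∀ (R : (LP P).Relations k) (t : Fin k → X),
      (∀ i, t i ∈ s) → (RelMap R (f ∘ t) ↔ RelMap R t)) : REmb P s f := by
  intro k R t ht
  by_cases hk : k ≤ 2 * Nat.card X
  · exact h k hk R t ht
  · exact ⟨fun h1 => absurd (arity_le hP hN f R t h1) hk,
      fun h1 => absurd (arity_le hP hX id R t h1) hk⟩

theorem REmb.injOn {P : Set ℕ} {X : Type u} {N : Type v}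
    [(LP P).Structure X] [(LP P).Structure N] (hX : IsKPStruct P X) (hN : IsKPStruct P N)
    {s : Set X} {f : X → N} (h : REmb P s f) : Set.InjOn f s := by
  intro x hx y hy hxy
  by_contra hne
  have hin : Function.Injective ![x, y] := by
    intro i j; fin_cases i <;> fin_cases j <;> simp [hne, Ne.symm hne]
  have hm : ∀ i, ![x, y] i ∈ s := by intro i; fin_cases i <;> simp [hx, hy]
  have h1 := (h.E 2 (by norm_num) ![x, y] ![x, y] hm hm).2 ((hX.1 2 (by norm_num)).2.2.1 _ hin)
  have h2 := ((hN.1 2 (by norm_num)).1 _ _ h1).1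
  have := @h2 0 1 (by simpa using hxy)
  simp at this

/-- `N` is nonempty, satisfies the axioms, and realizes all one-point extensions. -/
structure Gen (P : Set ℕ) (N : Type w) [(LP P).Structure N] : Prop where
  ne : Nonempty N
  kp : IsKPStruct P N
  ext : ∀ (X : Type v) [Finite X] [(LP P).Structure X], IsKPStruct P X → ∀ (x0 : X) (f : X → N),
    REmb P {x0}ᶜ f → ∃ g : X → N, (∀ x, x ≠ x0 → g x = f x) ∧ REmb P Set.univ g

/-- Atomic formulas. -/
def atomF (L : FirstOrder.Language.{0, 0}) {X : Type u} {k : ℕ} (R : L.Relations k)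
    (t : Fin k → X) : L.Formula X :=
  R.formula (fun i => Term.var (t i))

theorem realize_atomF {L : FirstOrder.Language.{0, 0}} {X : Type u} {N : Type v} [L.Structure N]
    {k : ℕ} (R : L.Relations k) (t : Fin k → X) (f : X → N) :
    (atomF L R t).Realize f ↔ RelMap R (f ∘ t) := by
  unfold atomF
  rw [Formula.realize_rel]
  rfl

theorem kp_transfer {P : Set ℕ} {M : Type u} {N : Type v} [(LP P).Structure M]
    [(LP P).Structure N] (h : M ≅[LP P] N) (hM : IsKPStruct P M) : IsKPStruct P N := by
  have key : ∀ (n : ℕ) (x : Fin 4 → Fin n → N), ∃ x' : Fin 4 → Fin n → M,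
      (∀ i, Function.Injective (x' i) ↔ Function.Injective (x i)) ∧
      (∀ hn i j, ∀ σ τ : Equiv.Perm (Fin n),
        ERelP P M n hn (x' i ∘ σ) (x' j ∘ τ) ↔ ERelP P N n hn (x i ∘ σ) (x j ∘ τ)) ∧
      (∀ hn i j, LTRelP P M n hn (x' i) (x' j) ↔ LTRelP P N n hn (x i) (x j)) := by
    intro n x
    let X := Fin 4 × Fin n
    let φ : (X × X) ⊕ ((LP P).Relations (n + n) × (Fin (n + n) → X)) → (LP P).Formula X :=
      Sum.elim (fun p => Term.equal (Term.var p.1) (Term.var p.2)) (fun p => atomF _ p.1 p.2)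
    obtain ⟨f', hf'⟩ := transfer h φ (fun p : X => x p.1 p.2)
    have heq : ∀ p q : X, f' p = f' q ↔ x p.1 p.2 = x q.1 q.2 := by
      intro p q
      simpa [φ, Term.equal, Formula.Realize] using hf' (Sum.inl (p, q))
    have hrel : ∀ (R : (LP P).Relations (n + n)) (t : Fin (n + n) → X), RelMap R (f' ∘ t) ↔ RelMap R ((fun p : X => x p.1 p.2) ∘ t) := by
      intro R t
      simpa [φ, realize_atomF] using hf' (Sum.inr (R, t))
    refine ⟨fun i j => f' (i, j), ?_, ?_, ?_⟩
    · intro i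
      simp only [Function.Injective, heq]
    · intro hn i j σ τ
      have := hrel (EsymbP P n hn) (Fin.append (fun a => (i, σ a)) (fun a => (j, τ a)))
      rw [append_comp, append_comp] at this
      exact this
    · intro hn i j
      have := hrel (LTsymbP P n hn) (Fin.append (fun a => (i, a)) (fun a => (j, a)))
      rw [append_comp, append_comp] at this
      exact this
  have key' : ∀ (n : ℕ) (a b c d : Fin n → N), ∃ a' b' c' d' : Fin n → M,
      (Function.Injective a' ↔ Function.Injective a) ∧
      (Function.Injective b' ↔ Function.Injective b) ∧
      (∀ hn, ∀ σ τ : Equiv.Perm (Fin n),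
        ERelP P M n hn (a' ∘ σ) (b' ∘ τ) ↔ ERelP P N n hn (a ∘ σ) (b ∘ τ)) ∧
      (∀ hn, (ERelP P M n hn a' a' ↔ ERelP P N n hn a a) ∧
        (ERelP P M n hn a' b' ↔ ERelP P N n hn a b) ∧
        (ERelP P M n hn b' a' ↔ ERelP P N n hn b a) ∧
        (ERelP P M n hn b' c' ↔ ERelP P N n hn b c) ∧
        (ERelP P M n hn a' c' ↔ ERelP P N n hn a c) ∧
        (ERelP P M n hn c' d' ↔ ERelP P N n hn c d)) ∧
      (∀ hn, (LTRelP P M n hn a' b' ↔ LTRelP P N n hn a b) ∧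
        (LTRelP P M n hn b' a' ↔ LTRelP P N n hn b a) ∧
        (LTRelP P M n hn b' c' ↔ LTRelP P N n hn b c) ∧
        (LTRelP P M n hn b' d' ↔ LTRelP P N n hn b d) ∧
        (LTRelP P M n hn a' c' ↔ LTRelP P N n hn a c)) := by
    intro n a b c d
    obtain ⟨x', h1, h2, h3⟩ := key n ![a, b, c, d]
    have h2' := fun hn i j => h2 hn i j 1 1
    simp only [Equiv.Perm.coe_one, Function.comp_id] at h2'
    exact ⟨x' 0, x' 1, x' 2, x' 3, h1 0, h1 1, fun hn => h2 hn 0 1,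
      fun hn => ⟨h2' hn 0 0, h2' hn 0 1, h2' hn 1 0, h2' hn 1 2, h2' hn 0 2, h2' hn 2 3⟩,
      fun hn => ⟨h3 hn 0 1, h3 hn 1 0, h3 hn 1 2, h3 hn 1 3, h3 hn 0 2⟩⟩
  refine ⟨fun n hn => ?_, fun n hn hn0 => ?_⟩
  · obtain ⟨A1, A2, A3, A4, A5⟩ := hM.1 n hn
    refine ⟨fun x y hxy => ?_, fun x y σ τ hxy => ?_, fun x hx => ?_, fun x y hxy => ?_,
      fun x y z hxy hyz => ?_⟩
    · obtain ⟨a, b, c, d, i1, i2, p, e, -⟩ := key' n x y x y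
      have := A1 a b ((e hn).2.1.2 hxy)
      exact ⟨i1.1 this.1, i2.1 this.2⟩
    · obtain ⟨a, b, c, d, i1, i2, p, e, -⟩ := key' n x y x y
      exact (p hn σ τ).1 (A2 a b σ τ ((e hn).2.1.2 hxy))
    · obtain ⟨a, b, c, d, i1, i2, p, e, -⟩ := key' n x x x x
      exact (e hn).1.1 (A3 a (i1.2 hx))
    · obtain ⟨a, b, c, d, i1, i2, p, e, -⟩ := key' n x y x y
      exact (e hn).2.2.1.1 (A4 _ _ ((e hn).2.1.2 hxy))
    · obtain ⟨a, b, c, d, i1, i2, p, e, -⟩ := key' n x y z y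
      exact (e hn).2.2.2.2.1.1 (A5 _ _ _ ((e hn).2.1.2 hxy) ((e hn).2.2.2.1.2 hyz))
  · obtain ⟨A1, A2, A3, A4, A5⟩ := hM.2 n hn hn0
    refine ⟨fun x y hxy => ?_, fun x x' y y' hx hy hxy => ?_, fun x y hxy => ?_,
      fun x y z hxy hyz => ?_, fun x y hx hy hxy => ?_⟩
    · obtain ⟨a, b, c, d, i1, i2, p, e, l⟩ := key' n x y x y
      have := A1 a b ((l hn).1.2 hxy)
      exact ⟨i1.1 this.1, i2.1 this.2⟩
    · obtain ⟨a, b, c, d, i1, i2, p, e, l⟩ := key' n x x' y y'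
      exact (l hn).2.2.2.1.1 (A2 a b c d ((e hn0).2.1.2 hx) ((e hn0).2.2.2.2.2.2 hy)
        ((l hn).2.2.2.2.2 hxy))
    · obtain ⟨a, b, c, d, i1, i2, p, e, l⟩ := key' n x y x y
      exact fun hE => A3 _ _ ((l hn).1.2 hxy) ((e hn0).2.1.2 hE)
    · obtain ⟨a, b, c, d, i1, i2, p, e, l⟩ := key' n x y z y
      exact (l hn).2.2.2.2.1 (A4 _ _ _ ((l hn).1.2 hxy) ((l hn).2.2.1.2 hyz))
    · obtain ⟨a, b, c, d, i1, i2, p, e, l⟩ := key' n x y x y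
      exact (A5 a b (i1.2 hx) (i2.2 hy) (fun hE => hxy ((e hn0).2.1.1 hE))).imp
        (l hn).1.1 (l hn).2.1.1

theorem Gen.transfer {P : Set ℕ} (hP : ∀ n ∈ P, 3 ≤ n) {M : Type u} {N : Type w}
    [(LP P).Structure M] [(LP P).Structure N] (h : M ≅[LP P] N) [hne : Nonempty N]
    (hM : Gen.{v} P M) : Gen.{v} P N := by
  classical
  have hN := kp_transfer h hM.kp
  refine ⟨hne, hN, ?_⟩
  intro X _ _ hX x0 f hf
  let ι := Σ k : Fin (2 * Nat.card X + 1), (LP P).Relations k × (Fin k → X)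
  let lit : ι → (LP P).Formula X := fun a =>
    if RelMap a.2.1 a.2.2 then atomF _ a.2.1 a.2.2 else ∼(atomF _ a.2.1 a.2.2)
  have hlitM : ∀ (a : ι) (g : X → M),
      (lit a).Realize g ↔ (RelMap a.2.1 (g ∘ a.2.2) ↔ RelMap a.2.1 a.2.2) := by
    intro a g
    simp only [lit]
    split_ifs with hh
    · simp [realize_atomF, hh]
    · simp [realize_atomF, hh]
  have hlitN : ∀ (a : ι) (g : X → N),
      (lit a).Realize g ↔ (RelMap a.2.1 (g ∘ a.2.2) ↔ RelMap a.2.1 a.2.2) := by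
    intro a g
    simp only [lit]
    split_ifs with hh
    · simp [realize_atomF, hh]
    · simp [realize_atomF, hh]
  let eqs : {x : X // x ≠ x0} → (LP P).Formula (X ⊕ X) := fun x =>
    Term.equal (Term.var (Sum.inr x.1)) (Term.var (Sum.inl x.1))
  let χ : (LP P).Formula X := Formula.iExs X
    (((Formula.iInf lit).relabel Sum.inr : (LP P).Formula (X ⊕ X)) ⊓ Formula.iInf eqs)
  have hχM : ∀ f : X → M, χ.Realize f ↔ ∃ g : X → M, (∀ a, (lit a).Realize g) ∧
      ∀ x, x ≠ x0 → g x = f x := by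
    intro f
    simp [χ, eqs, Formula.realize_iExs, Formula.realize_iInf]
  have hχN : ∀ f : X → N, χ.Realize f ↔ ∃ g : X → N, (∀ a, (lit a).Realize g) ∧
      ∀ x, x ≠ x0 → g x = f x := by
    intro f
    simp [χ, eqs, Formula.realize_iExs, Formula.realize_iInf]
  obtain ⟨f', hf'⟩ := KPAux.transfer h
    (fun o : Option ι => o.elim χ (fun a => atomF _ a.2.1 a.2.2)) f
  have hf'1 : REmb P {x0}ᶜ f' := by
    refine REmb.of_bdd hP hX hM.kp fun k hk R t ht => ?_
    have := hf' (some ⟨⟨k, by omega⟩, R, t⟩)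
    simp only [Option.elim, realize_atomF] at this
    exact this.trans (hf k R t ht)
  obtain ⟨g', hg1, hg2⟩ := hM.ext X hX x0 f' hf'1
  have hc : χ.Realize f' := (hχM f').2 ⟨g', fun a => (hlitM a g').2
    (hg2 _ a.2.1 a.2.2 (fun _ => trivial)), hg1⟩
  obtain ⟨g, hga, hgb⟩ := (hχN f).1 ((hf' none).1 hc)
  refine ⟨g, hgb, REmb.of_bdd hP hX hN fun k hk R t ht => ?_⟩
  exact (hlitN ⟨⟨k, by omega⟩, R, t⟩ g).1 (hga _)

theorem kp_of_remb {P : Set ℕ} {X : Type u} {N : Type v} [(LP P).Structure X]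
    [(LP P).Structure N] {f : X → N} (hinj : Function.Injective f) (hf : REmb P Set.univ f)
    (hN : IsKPStruct P N) : IsKPStruct P X := by
  have hE : ∀ n hn (x y : Fin n → X), ERelP P X n hn x y ↔ ERelP P N n hn (f ∘ x) (f ∘ y) :=
    fun n hn x y => (hf.E n hn x y (fun _ => trivial) (fun _ => trivial)).symm
  have hL : ∀ n hn (x y : Fin n → X), LTRelP P X n hn x y ↔ LTRelP P N n hn (f ∘ x) (f ∘ y) :=
    fun n hn x y => (hf.LT n hn x y (fun _ => trivial) (fun _ => trivial)).symm
  refine ⟨fun n hn => ?_, fun n hn hn0 => ?_⟩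
  · obtain ⟨A1, A2, A3, A4, A5⟩ := hN.1 n hn
    simp only [hE]
    exact ⟨fun x y h => (A1 _ _ h).imp (·.of_comp) (·.of_comp), fun x y σ τ h => A2 _ _ σ τ h,
      fun x h => A3 _ (hinj.comp h), fun x y h => A4 _ _ h, fun x y z h h' => A5 _ _ _ h h'⟩
  · obtain ⟨A1, A2, A3, A4, A5⟩ := hN.2 n hn hn0
    simp only [hE, hL]
    exact ⟨fun x y h => (A1 _ _ h).imp (·.of_comp) (·.of_comp),
      fun x x' y y' h h' h'' => A2 _ _ _ _ h h' h'',
      fun x y h => A3 _ _ h, fun x y z h h' => A4 _ _ _ h h',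
      fun x y h h' h'' => A5 _ _ (hinj.comp h) (hinj.comp h') h''⟩

theorem remb_embedding {P : Set ℕ} {X : Type u} {N : Type v} [(LP P).Structure X]
    [(LP P).Structure N] (e : X ↪[LP P] N) : REmb P Set.univ e :=
  fun _ R t _ => e.map_rel R t

theorem Gen.extPair {P : Set ℕ} {M : Type v} {N : Type w} [(LP P).Structure M]
    [(LP P).Structure N] (hM : IsKPStruct P M) (hN : Gen.{v} P N) :
    (LP P).IsExtensionPair M N := by
  classical
  rw [isExtensionPair_iff_exists_embedding_closure_singleton_sup]
  intro S hS f m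
  have hYfg : (Substructure.closure (LP P) {m} ⊔ S).FG :=
    (Substructure.fg_closure_singleton m).sup hS
  have hfin : Finite ↥(Substructure.closure (LP P) {m} ⊔ S) := hYfg.finite
  have hsub : ∀ y : ↥(Substructure.closure (LP P) {m} ⊔ S), y.1 = m ∨ y.1 ∈ S := by
    intro y
    have hle : Substructure.closure (LP P) {m} ⊔ S ≤
        Substructure.closure (LP P) (insert m (S : Set M)) :=
      sup_le (Substructure.closure_mono (by simp))
        (fun x hx => Substructure.subset_closure (Set.mem_insert_of_mem _ hx))
    have := hle y.2
    rw [Substructure.mem_closure_iff_of_isRelational] at this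
    simpa using this
  have hm : m ∈ Substructure.closure (LP P) {m} ⊔ S :=
    (le_sup_left : _ ≤ Substructure.closure (LP P) {m} ⊔ S)
      (Substructure.subset_closure (Set.mem_singleton m))
  have hSY : S ≤ Substructure.closure (LP P) {m} ⊔ S := le_sup_right
  change ∃ g : ↥(Substructure.closure (LP P) {m} ⊔ S) ↪[LP P] N,
    f = g.comp (Substructure.inclusion hSY)
  generalize Substructure.closure (LP P) {m} ⊔ S = Y at *
  have hYkp : IsKPStruct P Y :=
    kp_of_remb Y.subtype.injective (remb_embedding Y.subtype) hM
  obtain ⟨n0⟩ := hN.ne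
  let f₀ : Y → N := fun y => if h : y.1 ∈ S then f ⟨y.1, h⟩ else n0
  have hf0 : REmb P {y : Y | y.1 ∈ S} f₀ := by
    intro k R t ht
    have h1 : f₀ ∘ t = f ∘ (fun i => (⟨(t i).1, ht i⟩ : S)) := by
      ext i
      simp only [f₀, Function.comp]
      exact dif_pos (ht i)
    rw [h1, f.map_rel]
    rfl
  have hg : ∃ g : Y → N, (∀ y : Y, y.1 ∈ S → g y = f₀ y) ∧ REmb P Set.univ g := by
    by_cases hmS : m ∈ S
    · refine ⟨f₀, fun _ _ => rfl, fun k R t _ => hf0 k R t fun i => ?_⟩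
      rcases hsub (t i) with h | h
      · simpa [h] using hmS
      · exact h
    · obtain ⟨g, hg1, hg2⟩ := hN.ext Y hYkp ⟨m, hm⟩ f₀ (fun k R t ht => hf0 k R t fun i => by
        rcases hsub (t i) with h | h
        · exact absurd (Subtype.ext h) (ht i)
        · exact h)
      refine ⟨g, fun y hy => hg1 y ?_, hg2⟩
      rintro rfl
      exact hmS hy
  obtain ⟨g, hg1, hg2⟩ := hg
  have hginj := hg2.injOn hYkp hN.kp
  refine ⟨⟨⟨g, fun a b h => hginj trivial trivial h⟩, fun F => isEmptyElim F,
    fun R t => hg2 _ R t fun _ => trivial⟩, ?_⟩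
  ext x
  have := hg1 ⟨x.1, hSY x.2⟩ x.2
  simp only [f₀] at this
  rw [dif_pos x.2] at this
  exact this.symm

theorem Gen.fraisse {P : Set ℕ} (hP : ∀ n ∈ P, 3 ≤ n) {N : Type w} [(LP P).Structure N] [Countable N]
    (hN : Gen.{w} P N) : IsFraisseLimit (KP.{w} P) N where
  ultrahomogeneous :=
    (isUltrahomogeneous_iff_IsExtensionPair Structure.cg_of_countable).2 (hN.extPair hN.kp)
  age := by
    ext B
    constructor
    · rintro ⟨h1, ⟨e⟩⟩
      exact ⟨h1.finite, kp_of_remb e.injective (remb_embedding e) hN.kp⟩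
    · rintro ⟨h1, h2⟩
      have hfg : Structure.FG (LP P) B := Structure.fg_iff_finite.2 h1
      refine ⟨hfg, ?_⟩
      have hc : IsEmpty (LP P).Constants := inferInstanceAs (IsEmpty Empty)
      have hr : IsEmpty ((LP P).Relations 0) := by
        refine ⟨fun R => ?_⟩
        rcases R with ⟨n, hn, h⟩ | ⟨n, hn, h⟩
        · omega
        · have := hP n hn
          omega
      obtain ⟨g, -⟩ := embedding_from_cg hfg.cg default (hN.extPair h2)
      exact ⟨g⟩

theorem ext_lin {T : Type u} [Finite T] (e l : T → T → Prop) (erefl : ∀ a, e a a)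
    (esymm : ∀ a b, e a b → e b a)
    (linv : ∀ a a' b b', e a a' → e b b' → l a b → l a' b')
    (lne : ∀ a b, l a b → ¬ e a b) (ltrans : ∀ a b c, l a b → l b c → l a c)
    (ltot : ∀ a b, ¬ e a b → l a b ∨ l b a) (T0 : Set T) (v : T → ℚ)
    (hv : ∀ a ∈ T0, ∀ b ∈ T0, (v a = v b ↔ e a b) ∧ (v a < v b ↔ l a b)) :
    ∃ w : T → ℚ, (∀ a ∈ T0, w a = v a) ∧ ∀ a b, (w a = w b ↔ e a b) ∧ (w a < w b ↔ l a b) := by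
  classical
  have lirr : ∀ a, ¬ l a a := fun a h => lne a a h (erefl a)
  have : Fintype T := Fintype.ofFinite T
  suffices H : ∀ s : Finset T, ∃ w : T → ℚ, (∀ a ∈ T0, w a = v a) ∧
      ∀ a ∈ T0 ∪ s, ∀ b ∈ T0 ∪ s, (w a = w b ↔ e a b) ∧ (w a < w b ↔ l a b) by
    obtain ⟨w, h1, h2⟩ := H Finset.univ
    exact ⟨w, h1, fun a b => h2 a (by simp) b (by simp)⟩
  intro s
  induction s using Finset.induction_on with
  | empty => exact ⟨v, fun _ _ => rfl, by simpa using hv⟩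
  | insert a s has ih =>
    obtain ⟨w, h1, h2⟩ := ih
    by_cases ha : a ∈ T0 ∪ (s : Set T)
    · refine ⟨w, h1, ?_⟩
      have : T0 ∪ ((insert a s : Finset T) : Set T) = T0 ∪ s := by
        rw [Finset.coe_insert, Set.union_insert, Set.insert_eq_of_mem ha]
      rw [this]; exact h2
    · obtain ⟨m, hm⟩ : ∃ m : ℚ, ∀ t ∈ T0 ∪ (s : Set T),
          (m = w t ↔ e a t) ∧ (m < w t ↔ l a t) ∧ (w t < m ↔ l t a) := by
        by_cases hex : ∃ t ∈ T0 ∪ (s : Set T), e a t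
        · obtain ⟨t, ht, het⟩ := hex
          refine ⟨w t, fun q hq => ⟨(h2 t ht q hq).1.trans ⟨?_, ?_⟩,
            (h2 t ht q hq).2.trans ⟨?_, ?_⟩, (h2 q hq t ht).2.trans ⟨?_, ?_⟩⟩⟩
          · intro h
            by_contra hne
            rcases ltot _ _ hne with h' | h'
            · exact lne _ _ (linv _ _ _ _ het (erefl _) h') h
            · exact lne _ _ (linv _ _ _ _ (erefl _) het h') (esymm _ _ h)
          · intro h
            by_contra hne
            rcases ltot _ _ hne with h' | h'
            · exact lne _ _ (linv _ _ _ _ (esymm _ _ het) (erefl _) h') h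
            · exact lne _ _ (linv _ _ _ _ (erefl _) (esymm _ _ het) h') (esymm _ _ h)
          · exact linv _ _ _ _ (esymm _ _ het) (erefl _)
          · exact linv _ _ _ _ het (erefl _)
          · exact linv _ _ _ _ (erefl _) (esymm _ _ het)
          · exact linv _ _ _ _ (erefl _) het
        · push Not at hex
          obtain ⟨m, hlo, hhi⟩ := Order.exists_between_finsets
            ((Finset.univ.filter fun t => t ∈ T0 ∪ (s : Set T) ∧ l t a).image w)
            ((Finset.univ.filter fun t => t ∈ T0 ∪ (s : Set T) ∧ l a t).image w) (by
              intro x hx y hy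
              simp only [Finset.mem_image, Finset.mem_filter, Finset.mem_univ, true_and] at hx hy
              obtain ⟨p, ⟨hp, hp'⟩, rfl⟩ := hx
              obtain ⟨q, ⟨hq, hq'⟩, rfl⟩ := hy
              exact (h2 p hp q hq).2.2 (ltrans _ _ _ hp' hq'))
          have hlo' : ∀ t ∈ T0 ∪ (s : Set T), l t a → w t < m := fun t ht h =>
            hlo _ (Finset.mem_image_of_mem _ (by simp only [Finset.mem_filter, Finset.mem_univ, true_and]; exact ⟨ht, h⟩))
          have hhi' : ∀ t ∈ T0 ∪ (s : Set T), l a t → m < w t := fun t ht h =>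
            hhi _ (Finset.mem_image_of_mem _ (by simp only [Finset.mem_filter, Finset.mem_univ, true_and]; exact ⟨ht, h⟩))
          refine ⟨m, fun t ht => ?_⟩
          have hne := hex t ht
          rcases ltot _ _ hne with h | h
          · have := hhi' t ht h
            have h3 : ¬ l t a := fun h' => lirr _ (ltrans _ _ _ h h')
            exact ⟨by simp [hne, this.ne], by simp [h, this], by simp [h3, this.le]⟩
          · have := hlo' t ht h
            have h3 : ¬ l a t := fun h' => lirr _ (ltrans _ _ _ h h')
            exact ⟨by simp [hne, this.ne'], by simp [h3, this.le], by simp [h, this]⟩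
      have hne : ∀ t ∈ T0 ∪ (s : Set T), t ≠ a := fun t ht h => ha (h ▸ ht)
      have hmem : ∀ t ∈ T0 ∪ ((insert a s : Finset T) : Set T), t = a ∨ t ∈ T0 ∪ (s : Set T) := by
        intro t ht
        simpa [or_left_comm] using ht
      refine ⟨Function.update w a m, fun t ht => ?_, ?_⟩
      · rw [Function.update_of_ne (hne t (Or.inl ht))]; exact h1 t ht
      · intro p hp q hq
        rcases hmem p hp with hpa | hp' <;> rcases hmem q hq with hqa | hq'
        · rw [hpa, hqa]; simp [erefl, lirr]
        · rw [hpa, Function.update_self, Function.update_of_ne (hne q hq')]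
          exact ⟨(hm q hq').1, (hm q hq').2.1⟩
        · rw [hqa, Function.update_self, Function.update_of_ne (hne p hp')]
          exact ⟨eq_comm.trans ((hm p hp').1.trans ⟨esymm _ _, esymm _ _⟩), (hm p hp').2.2⟩
        · rw [Function.update_of_ne (hne p hp'), Function.update_of_ne (hne q hq')]
          exact h2 p hp' q hq'

theorem ext_eq {T : Type u} [Finite T] (e : T → T → Prop) (erefl : ∀ a, e a a)
    (esymm : ∀ a b, e a b → e b a) (etrans : ∀ a b c, e a b → e b c → e a c)
    (T0 : Set T) (v : T → ℚ)
    (hv : ∀ a ∈ T0, ∀ b ∈ T0, (v a = v b ↔ e a b)) :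
    ∃ w : T → ℚ, (∀ a ∈ T0, w a = v a) ∧ ∀ a b, (w a = w b ↔ e a b) := by
  classical
  have : Fintype T := Fintype.ofFinite T
  suffices H : ∀ s : Finset T, ∃ w : T → ℚ, (∀ a ∈ T0, w a = v a) ∧
      ∀ a ∈ T0 ∪ s, ∀ b ∈ T0 ∪ s, (w a = w b ↔ e a b) by
    obtain ⟨w, h1, h2⟩ := H Finset.univ
    exact ⟨w, h1, fun a b => h2 a (by simp) b (by simp)⟩
  intro s
  induction s using Finset.induction_on with
  | empty => exact ⟨v, fun _ _ => rfl, by simpa using hv⟩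
  | insert a s has ih =>
    obtain ⟨w, h1, h2⟩ := ih
    by_cases ha : a ∈ T0 ∪ (s : Set T)
    · refine ⟨w, h1, ?_⟩
      have : T0 ∪ ((insert a s : Finset T) : Set T) = T0 ∪ s := by
        rw [Finset.coe_insert, Set.union_insert, Set.insert_eq_of_mem ha]
      rw [this]; exact h2
    · obtain ⟨m, hm⟩ : ∃ m : ℚ, ∀ t ∈ T0 ∪ (s : Set T), (m = w t ↔ e a t) := by
        by_cases hex : ∃ t ∈ T0 ∪ (s : Set T), e a t
        · obtain ⟨t, ht, het⟩ := hex
          exact ⟨w t, fun q hq => (h2 t ht q hq).trans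
            ⟨etrans _ _ _ het, etrans _ _ _ (esymm _ _ het)⟩⟩
        · push Not at hex
          obtain ⟨m, hm⟩ := Infinite.exists_notMem_finset (Finset.univ.image w)
          refine ⟨m, fun t ht => ⟨fun h => absurd ?_ hm, fun h => absurd h (hex t ht)⟩⟩
          simp [h]
      have hne : ∀ t ∈ T0 ∪ (s : Set T), t ≠ a := fun t ht h => ha (h ▸ ht)
      have hmem : ∀ t ∈ T0 ∪ ((insert a s : Finset T) : Set T), t = a ∨ t ∈ T0 ∪ (s : Set T) := by
        intro t ht
        simpa [or_left_comm] using ht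
      refine ⟨Function.update w a m, fun t ht => ?_, ?_⟩
      · rw [Function.update_of_ne (hne t (Or.inl ht))]; exact h1 t ht
      · intro p hp q hq
        rcases hmem p hp with hpa | hp' <;> rcases hmem q hq with hqa | hq'
        · rw [hpa, hqa]; simp [erefl]
        · rw [hpa, Function.update_self, Function.update_of_ne (hne q hq')]
          exact hm q hq'
        · rw [hqa, Function.update_self, Function.update_of_ne (hne p hp')]
          exact eq_comm.trans ((hm p hp').trans ⟨esymm _ _, esymm _ _⟩)
        · rw [Function.update_of_ne (hne p hp'), Function.update_of_ne (hne q hq')]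
          exact h2 p hp' q hq'

theorem exists_rk : ∃ r : Finset ℕ → ℚ, ∀ (A : Finset ℕ) (ρ : Finset ℕ → ℚ),
    ∃ c, c ∉ A ∧ ∀ S, S ⊆ A → r (insert c S) = ρ S := by
  classical
  obtain ⟨en, hen⟩ := exists_surjective_nat (Finset ℕ →₀ ℚ)
  refine ⟨fun T => if h : T.Nonempty then en (T.max' h).unpair.1 (T.erase (T.max' h)) else 0, ?_⟩
  intro A ρ
  obtain ⟨k, hk⟩ := hen (Finsupp.onFinset A.powerset (fun S => if S ⊆ A then ρ S else 0) (by
    intro S hS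
    by_contra hc
    rw [Finset.mem_powerset] at hc
    simp [hc] at hS))
  have hlt : ∀ a ∈ A, a < Nat.pair k (A.sup id + 1) := by
    intro a ha
    have h1 : a ≤ A.sup id := Finset.le_sup (f := id) ha
    have h2 := Nat.right_le_pair k (A.sup id + 1)
    omega
  refine ⟨Nat.pair k (A.sup id + 1), fun h => lt_irrefl _ (hlt _ h), fun S hS => ?_⟩
  have hmax : ∀ h, (insert (Nat.pair k (A.sup id + 1)) S).max' h = Nat.pair k (A.sup id + 1) := by
    intro h
    apply le_antisymm
    · refine Finset.max'_le _ _ _ fun y hy => ?_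
      rcases Finset.mem_insert.1 hy with rfl | hy
      · exact le_rfl
      · exact (hlt y (hS hy)).le
    · exact Finset.le_max' _ _ (Finset.mem_insert_self _ _)
  beta_reduce
  rw [dif_pos (Finset.insert_nonempty _ _), hmax, Nat.unpair_pair, hk,
    Finset.erase_insert (fun h => lt_irrefl _ (hlt _ (hS h)))]
  simp [hS]

/-- The structure on `ℕ` coming from a rank function on finite sets. -/
@[reducible]
def rankStr (P : Set ℕ) (r : Finset ℕ → ℚ) : (LP P).Structure ℕ where
  funMap := fun F => isEmptyElim F
  RelMap := fun {k} R t => Sum.elim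
    (fun a : {n : ℕ // 0 < n ∧ k = n + n} =>
      Function.Injective (fun i : Fin a.1 => t (Fin.cast a.2.2.symm (Fin.castAdd a.1 i))) ∧
      Function.Injective (fun i : Fin a.1 => t (Fin.cast a.2.2.symm (Fin.natAdd a.1 i))) ∧
      r (Finset.univ.image (fun i : Fin a.1 => t (Fin.cast a.2.2.symm (Fin.castAdd a.1 i)))) =
      r (Finset.univ.image (fun i : Fin a.1 => t (Fin.cast a.2.2.symm (Fin.natAdd a.1 i)))))
    (fun a : {n : ℕ // n ∈ P ∧ k = n + n} =>
      Function.Injective (fun i : Fin a.1 => t (Fin.cast a.2.2.symm (Fin.castAdd a.1 i))) ∧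
      Function.Injective (fun i : Fin a.1 => t (Fin.cast a.2.2.symm (Fin.natAdd a.1 i))) ∧
      r (Finset.univ.image (fun i : Fin a.1 => t (Fin.cast a.2.2.symm (Fin.castAdd a.1 i)))) <
      r (Finset.univ.image (fun i : Fin a.1 => t (Fin.cast a.2.2.symm (Fin.natAdd a.1 i))))) R

theorem rank_E (P : Set ℕ) (r : Finset ℕ → ℚ) (n : ℕ) (hn : 0 < n) (x y : Fin n → ℕ) :
    @ERelP P ℕ (rankStr P r) n hn x y ↔ Function.Injective x ∧ Function.Injective y ∧
      r (Finset.univ.image x) = r (Finset.univ.image y) := by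
  simp only [ERelP, EsymbP, rankStr, RelMap, Sum.elim_inl, Fin.cast_eq_self, Fin.append_left,
    Fin.append_right]

theorem rank_LT (P : Set ℕ) (r : Finset ℕ → ℚ) (n : ℕ) (hn : n ∈ P) (x y : Fin n → ℕ) :
    @LTRelP P ℕ (rankStr P r) n hn x y ↔ Function.Injective x ∧ Function.Injective y ∧
      r (Finset.univ.image x) < r (Finset.univ.image y) := by
  simp only [LTRelP, LTsymbP, rankStr, RelMap, Sum.elim_inr, Fin.cast_eq_self, Fin.append_left,
    Fin.append_right]

theorem image_perm {n : ℕ} {X : Type u} [DecidableEq X] (x : Fin n → X) (σ : Equiv.Perm (Fin n)) :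
    Finset.univ.image (x ∘ σ) = Finset.univ.image x := by
  ext a
  simp only [Finset.mem_image, Finset.mem_univ, true_and, Function.comp]
  exact ⟨fun ⟨i, h⟩ => ⟨σ i, h⟩, fun ⟨i, h⟩ => ⟨σ.symm i, by simpa using h⟩⟩

theorem rank_kp (P : Set ℕ) (r : Finset ℕ → ℚ) : @IsKPStruct P ℕ (rankStr P r) := by
  letI := rankStr P r
  refine ⟨fun n hn => ?_, fun n hn hn0 => ?_⟩
  · simp only [rank_E]
    refine ⟨fun x y h => ⟨h.1, h.2.1⟩, fun x y σ τ h => ⟨h.1.comp σ.injective,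
      h.2.1.comp τ.injective, ?_⟩, fun x h => ⟨h, h, trivial⟩, fun x y h => ⟨h.2.1, h.1, h.2.2.symm⟩,
      fun x y z h h' => ⟨h.1, h'.2.1, h.2.2.trans h'.2.2⟩⟩
    rw [image_perm, image_perm]; exact h.2.2
  · simp only [rank_E, rank_LT]
    refine ⟨fun x y h => ⟨h.1, h.2.1⟩, fun x x' y y' h h' h'' => ⟨h.2.1, h'.2.1, ?_⟩,
      fun x y h h' => h.2.2.ne h'.2.2, fun x y z h h' => ⟨h.1, h'.2.1, h.2.2.trans h'.2.2⟩,
      fun x y hx hy h => ?_⟩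
    · rw [← h.2.2, ← h'.2.2]; exact h''.2.2
    · rcases lt_or_gt_of_ne (fun h' => h ⟨hx, hy, h'⟩) with h' | h'
      · exact Or.inl ⟨hx, hy, h'⟩
      · exact Or.inr ⟨hy, hx, h'⟩

theorem E_of_image_eq {P : Set ℕ} {X : Type u} [DecidableEq X] [(LP P).Structure X]
    (hX : IsKPStruct P X) {n : ℕ} (hn : 0 < n) {x y : Fin n → X} (hx : Function.Injective x)
    (hy : Function.Injective y) (h : Finset.univ.image x = Finset.univ.image y) :
    ERelP P X n hn x y := by
  have h1 : ∀ i, ∃ j, x j = y i := by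
    intro i
    have : y i ∈ Finset.univ.image x := by rw [h]; simp
    simpa using this
  choose s hs using h1
  have hsi : Function.Injective s := fun a b hab => hy (by rw [← hs, ← hs, hab])
  let σ : Equiv.Perm (Fin n) := Equiv.ofBijective s (Finite.injective_iff_bijective.1 hsi)
  have hσ : x ∘ σ = y := funext fun i => hs i
  have := (hX.1 n hn).2.1 x x 1 σ ((hX.1 n hn).2.2.1 x hx)
  rwa [hσ] at this

theorem gen_rank {P : Set ℕ} (hP : ∀ n ∈ P, 3 ≤ n) (r : Finset ℕ → ℚ)
    (hr : ∀ (A : Finset ℕ) (ρ : Finset ℕ → ℚ),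
      ∃ c, c ∉ A ∧ ∀ S, S ⊆ A → r (insert c S) = ρ S) :
    @Gen.{v} P ℕ (rankStr P r) := by
  classical
  letI := rankStr P r
  refine ⟨⟨0⟩, rank_kp P r, ?_⟩
  intro X _ _ hX x0 f hf
  have : Fintype X := Fintype.ofFinite X
  have hinj : Set.InjOn f {x0}ᶜ := hf.injOn hX (rank_kp P r)
  have hw : ∀ n, ∃ w : (Fin n → X) → ℚ,
      (∀ x, Function.Injective x → (∀ i, x i ≠ x0) → w x = r (Finset.univ.image (f ∘ x))) ∧
      ∀ x y, Function.Injective x → Function.Injective y →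
        (∀ hn, w x = w y ↔ ERelP P X n hn x y) ∧ (∀ hn, w x < w y ↔ LTRelP P X n hn x y) := by
    intro n
    rcases Nat.eq_zero_or_pos n with rfl | hn
    · exact ⟨fun x => r (Finset.univ.image (f ∘ x)), fun _ _ _ => rfl, fun x y _ _ =>
        ⟨fun h => absurd h (lt_irrefl _), fun h => absurd (hP _ h) (by norm_num)⟩⟩
    let T := {x : Fin n → X // Function.Injective x}
    let T0 : Set T := {x | ∀ i, x.1 i ≠ x0}
    let v : T → ℚ := fun x => r (Finset.univ.image (f ∘ x.1))
    have hfi : ∀ x ∈ T0, Function.Injective (f ∘ x.1) := fun x hx i j hij =>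
      x.2 (hinj (hx i) (hx j) hij)
    have hvE : ∀ a ∈ T0, ∀ b ∈ T0, (v a = v b ↔ ERelP P X n hn a.1 b.1) := by
      intro a ha b hb
      rw [← hf.E n hn a.1 b.1 ha hb, rank_E]
      simp only [hfi a ha, hfi b hb, true_and]; rfl
    have hfin : Finite T := inferInstance
    obtain ⟨A1, A2, A3, A4, A5⟩ := hX.1 n hn
    have hT : ∃ w : T → ℚ, (∀ a ∈ T0, w a = v a) ∧ ∀ a b : T,
        (∀ hn, w a = w b ↔ ERelP P X n hn a.1 b.1) ∧
        (∀ hn, w a < w b ↔ LTRelP P X n hn a.1 b.1) := by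
      by_cases hnP : n ∈ P
      · obtain ⟨B1, B2, B3, B4, B5⟩ := hX.2 n hnP hn
        have hvL : ∀ a ∈ T0, ∀ b ∈ T0, (v a < v b ↔ LTRelP P X n hnP a.1 b.1) := by
          intro a ha b hb
          rw [← hf.LT n hnP a.1 b.1 ha hb, rank_LT]
          simp only [hfi a ha, hfi b hb, true_and]; rfl
        obtain ⟨w, h1, h2⟩ := ext_lin (fun a b : T => ERelP P X n hn a.1 b.1)
          (fun a b : T => LTRelP P X n hnP a.1 b.1) (fun a => A3 _ a.2) (fun a b => A4 _ _)
          (fun a a' b b' => B2 _ _ _ _) (fun a b => B3 _ _) (fun a b c => B4 _ _ _)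
          (fun a b => B5 _ _ a.2 b.2) T0 v (fun a ha b hb => ⟨hvE a ha b hb, hvL a ha b hb⟩)
        exact ⟨w, h1, fun a b => ⟨fun _ => (h2 a b).1, fun _ => (h2 a b).2⟩⟩
      · obtain ⟨w, h1, h2⟩ := ext_eq (fun a b : T => ERelP P X n hn a.1 b.1)
          (fun a => A3 _ a.2) (fun a b => A4 _ _) (fun a b c => A5 _ _ _) T0 v hvE
        exact ⟨w, h1, fun a b => ⟨fun _ => h2 a b, fun h => absurd h hnP⟩⟩
    obtain ⟨w, h1, h2⟩ := hT
    refine ⟨fun x => if h : Function.Injective x then w ⟨x, h⟩ else 0, ?_, ?_⟩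
    · intro x hx hx0
      beta_reduce
      rw [dif_pos hx]
      exact h1 ⟨x, hx⟩ hx0
    · intro x y hx hy
      simp only [dif_pos hx, dif_pos hy]
      exact h2 ⟨x, hx⟩ ⟨y, hy⟩
  choose w hw1 hw2 using hw
  let pre : ∀ {n : ℕ}, (Fin n → X) → Finset ℕ := fun z => ((Finset.univ.image z).erase x0).image f
  let Q : Finset ℕ → (Σ n, Fin n → X) → Prop := fun S z =>
    Function.Injective z.2 ∧ x0 ∈ Finset.univ.image z.2 ∧ pre z.2 = S
  let ρ : Finset ℕ → ℚ := fun S => if h : ∃ z, Q S z then w _ h.choose.2 else 0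
  have hρ : ∀ n (z : Fin n → X), Function.Injective z → x0 ∈ Finset.univ.image z →
      ρ (pre z) = w n z := by
    intro n z hz hz0
    have hex : ∃ z', Q (pre z) z' := ⟨⟨n, z⟩, hz, hz0, rfl⟩
    simp only [ρ, dif_pos hex]
    have hspec := hex.choose_spec
    generalize hex.choose = z' at hspec
    obtain ⟨n', z'⟩ := z'
    obtain ⟨hi, h0, he⟩ := hspec
    have himg : Finset.univ.image z' = Finset.univ.image z := by
      have : (Finset.univ.image z').erase x0 = (Finset.univ.image z).erase x0 := by
        apply Finset.coe_injective
        refine (hinj.image_eq_image_iff ?_ ?_).1 ?_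
        · intro a ha; simpa using (Finset.mem_erase.1 ha).1
        · intro a ha; simpa using (Finset.mem_erase.1 ha).1
        · have := congrArg (fun s : Finset ℕ => (s : Set ℕ)) he
          simpa only [pre, Finset.coe_image] using this
      rw [← Finset.insert_erase h0, this, Finset.insert_erase hz0]
    have hcard : n' = n := by
      have := congrArg Finset.card himg
      rwa [Finset.card_image_of_injective _ hi, Finset.card_image_of_injective _ hz,
        Finset.card_univ, Finset.card_univ, Fintype.card_fin, Fintype.card_fin] at this
    subst hcard
    have hn : 0 < n' := by
      rcases Nat.eq_zero_or_pos n' with rfl | h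
      · simp at hz0
      · exact h
    exact ((hw2 n' z' z hi hz).1 hn).2 (E_of_image_eq hX hn hi hz himg)
  obtain ⟨c, hcA, hc⟩ := hr ((Finset.univ.erase x0).image f) ρ
  let g : X → ℕ := fun x => if x = x0 then c else f x
  have hg0 : g x0 = c := if_pos rfl
  have hg1 : ∀ x, x ≠ x0 → g x = f x := fun x hx => if_neg hx
  have hcf : ∀ x, x ≠ x0 → f x ≠ c := fun x hx h => hcA (by
    rw [← h]; exact Finset.mem_image_of_mem _ (by simp [hx]))
  have hginj : Function.Injective g := by
    intro a b hab
    by_cases ha : a = x0 <;> by_cases hb : b = x0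
    · rw [ha, hb]
    · rw [ha, hg0, hg1 b hb] at hab
      exact absurd hab.symm (hcf b hb)
    · rw [hb, hg0, hg1 a ha] at hab
      exact absurd hab (hcf a ha)
    · rw [hg1 a ha, hg1 b hb] at hab
      exact hinj ha hb hab
  have key : ∀ n (z : Fin n → X), Function.Injective z →
      r (Finset.univ.image (g ∘ z)) = w n z := by
    intro n z hz
    by_cases h0 : x0 ∈ Finset.univ.image z
    · have himg : Finset.univ.image (g ∘ z) = insert c (pre z) := by
        rw [← Finset.image_image, ← Finset.insert_erase h0, Finset.image_insert, hg0]
        congr 1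
        simp only [pre]
        exact Finset.image_congr fun a ha => hg1 a (Finset.mem_erase.1 ha).1
      rw [himg, hc _ (Finset.image_subset_image (Finset.erase_subset_erase _ (Finset.subset_univ _))),
        hρ n z hz h0]
    · have hz0 : ∀ i, z i ≠ x0 := fun i h => h0 (by rw [← h]; simp)
      have : g ∘ z = f ∘ z := funext fun i => hg1 _ (hz0 i)
      rw [this, hw1 n z hz hz0]
  refine ⟨g, hg1, REmb.of_rel ?_ ?_⟩
  · intro n hn x y _ _
    rw [rank_E]
    constructor
    · rintro ⟨h1, h2, h3⟩
      rw [key n x h1.of_comp, key n y h2.of_comp] at h3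
      exact ((hw2 n x y h1.of_comp h2.of_comp).1 hn).1 h3
    · intro h
      obtain ⟨h1, h2⟩ := (hX.1 n hn).1 x y h
      refine ⟨hginj.comp h1, hginj.comp h2, ?_⟩
      rw [key n x h1, key n y h2]
      exact ((hw2 n x y h1 h2).1 hn).2 h
  · intro n hn x y _ _
    rw [rank_LT]
    constructor
    · rintro ⟨h1, h2, h3⟩
      rw [key n x h1.of_comp, key n y h2.of_comp] at h3
      exact ((hw2 n x y h1.of_comp h2.of_comp).2 hn).1 h3
    · intro h
      obtain ⟨h1, h2⟩ := (hX.2 n hn (by have := hP n hn; omega)).1 x y h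
      refine ⟨hginj.comp h1, hginj.comp h2, ?_⟩
      rw [key n x h1, key n y h2]
      exact ((hw2 n x y h1 h2).2 hn).2 h

end KPAux

/-- `K_P` is a Fraïssé class, it has a Fraïssé limit `M` (a countable
ultrahomogeneous `L_P`-structure with age `K_P`), and `Th(M)` is `ℵ₀`-categorical. -/
theorem KP_isFraisse_limit_aleph0_categorical (P : Set ℕ) (hP : ∀ n ∈ P, 3 ≤ n) :
    IsFraisse (KP P) ∧
      ∃ (M : Type) (inst : (LP P).Structure M), Countable M ∧
        @Language.IsUltrahomogeneous (LP P) M inst ∧ @Language.age (LP P) M inst = KP P ∧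
        Cardinal.Categorical Cardinal.aleph0 (@Language.completeTheory (LP P) M inst) := by
  obtain ⟨r, hr⟩ := KPAux.exists_rk
  letI inst : (LP P).Structure ℕ := KPAux.rankStr P r
  refine ⟨?_, ℕ, inst, inferInstance, (KPAux.gen_rank hP r hr).fraisse hP |>.ultrahomogeneous,
    ((KPAux.gen_rank hP r hr).fraisse hP).age, ?_⟩
  · let e : ℕ ≃ ULift ℕ := Equiv.ulift.symm
    letI : (LP P).Structure (ULift ℕ) := e.inducedStructure
    have heq : ℕ ≅[LP P] (ULift ℕ) :=
      StrongHomClass.elementarilyEquivalent (e.inducedStructureEquiv (L := LP P))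
    exact (((KPAux.gen_rank hP r hr).transfer hP heq).fraisse hP).isFraisse
  · intro M N hM hN
    have key : ∀ (Q : (@Language.completeTheory (LP P) ℕ inst).ModelType),
        Cardinal.mk Q = Cardinal.aleph0 → ∃ _ : Countable Q, IsFraisseLimit (KP P) Q := by
      intro Q hQ
      have hc : Countable Q := Cardinal.mk_le_aleph0_iff.1 hQ.le
      have heq : ℕ ≅[LP P] Q := elementarilyEquivalent_iff.2 fun φ =>
        (realize_iff_of_model_completeTheory ℕ Q φ).symm
      exact ⟨hc, ((KPAux.gen_rank hP r hr).transfer hP heq).fraisse hP⟩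
    obtain ⟨h1, h2⟩ := key M hM
    obtain ⟨h3, h4⟩ := key N hN
    exact h2.nonempty_equiv h4
end

section
/- Let k ≥ 1 and for each i ≤ k let ρ_i be a finite partial injection on M_i (the set of E_i-classes of i-element subsets of M) which, when i ∈ P, is strictly increasing with respect to the order <_i on M_i. Then there exists an automorphism α of M such that for each i ≤ k the permutation of M_i induced by α agrees with ρ_i on the domain of ρ_i. -/
open FirstOrder Language Structure CategoryTheory

namespace KPaux

instance instRel (P : Set ℕ) : (LP P).IsRelational := fun _ => inferInstanceAs (IsEmpty Empty)

/-- An injective map preserving the relations is an embedding. -/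
def mkEmb (P : Set ℕ) {A B : Type} [(LP P).Structure A] [(LP P).Structure B]
    (f : A → B) (hf : Function.Injective f)
    (hE : ∀ n (hn : 0 < n) (u v : Fin n → A), ERelP P B n hn (f ∘ u) (f ∘ v) ↔ ERelP P A n hn u v)
    (hL : ∀ n (hn : n ∈ P) (u v : Fin n → A),
      LTRelP P B n hn (f ∘ u) (f ∘ v) ↔ LTRelP P A n hn u v) : A ↪[LP P] B where
  toFun := f
  inj' := hf
  map_fun' := fun g => g.elim
  map_rel' := by
    intro n r w
    have key : ∀ (n : ℕ) (w : Fin (n + n) → A),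
        ∃ u v : Fin n → A, w = Fin.append u v ∧ f ∘ w = Fin.append (f ∘ u) (f ∘ v) := by
      intro n w
      refine ⟨fun i => w (Fin.castAdd n i), fun i => w (Fin.natAdd n i), ?_, ?_⟩
      · exact (Fin.append_castAdd_natAdd).symm
      · exact (Fin.append_castAdd_natAdd (f := f ∘ w)).symm
    rcases r with ⟨n, hn, rfl⟩ | ⟨n, hn, rfl⟩
    · obtain ⟨u, v, h1, h2⟩ := key n w
      have := hE n hn u v
      simp only [ERelP, EsymbP] at this
      rw [← h1, ← h2] at this
      exact this
    · obtain ⟨u, v, h1, h2⟩ := key n w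
      have := hL n hn u v
      simp only [LTRelP, LTsymbP] at this
      rw [← h1, ← h2] at this
      exact this

theorem emb_E (P : Set ℕ) {A B : Type} [(LP P).Structure A] [(LP P).Structure B]
    (f : A ↪[LP P] B) (n) (hn : 0 < n) (u v : Fin n → A) :
    ERelP P B n hn (f ∘ u) (f ∘ v) ↔ ERelP P A n hn u v := by
  unfold ERelP
  rw [← f.map_rel]
  have : Fin.append (f ∘ u) (f ∘ v) = f ∘ Fin.append u v := by
    ext i; refine Fin.addCases (fun i => ?_) (fun i => ?_) i
    · simp only [Fin.append_left, Function.comp_apply]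
    · simp only [Fin.append_right, Function.comp_apply]
  rw [this]

theorem emb_L (P : Set ℕ) {A B : Type} [(LP P).Structure A] [(LP P).Structure B]
    (f : A ↪[LP P] B) (n) (hn : n ∈ P) (u v : Fin n → A) :
    LTRelP P B n hn (f ∘ u) (f ∘ v) ↔ LTRelP P A n hn u v := by
  unfold LTRelP
  rw [← f.map_rel]
  have : Fin.append (f ∘ u) (f ∘ v) = f ∘ Fin.append u v := by
    ext i; refine Fin.addCases (fun i => ?_) (fun i => ?_) i
    · simp only [Fin.append_left, Function.comp_apply]
    · simp only [Fin.append_right, Function.comp_apply]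
  rw [this]

/-- The substructure with a given carrier. -/
def sub (P : Set ℕ) (M : Type) [(LP P).Structure M] (s : Set M) : (LP P).Substructure M where
  carrier := s
  fun_mem := fun f => f.elim

theorem sub_fg (P : Set ℕ) (M : Type) [(LP P).Structure M] (s : Set M) (hs : s.Finite) :
    (sub P M s).FG := by
  rw [Substructure.fg_def]
  refine ⟨s, hs, ?_⟩
  apply SetLike.coe_injective
  rw [Substructure.closure_eq_of_isRelational]
  rfl

theorem sub_KP (P : Set ℕ) (M : Type) [(LP P).Structure M] (hage : (LP P).age M = KP P)
    (s : Set M) (hs : s.Finite) : IsKPStruct P (sub P M s) := by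
  have h : (Bundled.of (sub P M s) : Bundled (LP P).Structure) ∈ (LP P).age M :=
    ⟨(Substructure.fg_iff_structure_fg _).1 (sub_fg P M s hs), ⟨(sub P M s).subtype⟩⟩
  rw [hage] at h
  exact h.2

/-- `M` itself satisfies the axioms. -/
theorem M_KP (P : Set ℕ) (M : Type) [(LP P).Structure M] (hage : (LP P).age M = KP P) :
    IsKPStruct P M := by
  have lift : ∀ (n : ℕ) (x y z t : Fin n → M), ∃ (S : (LP P).Substructure M)
      (x' y' z' t' : Fin n → S), IsKPStruct P S ∧ x = S.subtype ∘ x' ∧ y = S.subtype ∘ y' ∧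
        z = S.subtype ∘ z' ∧ t = S.subtype ∘ t' := by
    intro n x y z t
    refine ⟨sub P M (Set.range x ∪ Set.range y ∪ Set.range z ∪ Set.range t),
      fun i => ⟨x i, Or.inl (Or.inl (Or.inl ⟨i, rfl⟩))⟩,
      fun i => ⟨y i, Or.inl (Or.inl (Or.inr ⟨i, rfl⟩))⟩,
      fun i => ⟨z i, Or.inl (Or.inr ⟨i, rfl⟩)⟩,
      fun i => ⟨t i, Or.inr ⟨i, rfl⟩⟩,
      sub_KP P M hage _ ?_, rfl, rfl, rfl, rfl⟩
    exact (((Set.finite_range _).union (Set.finite_range _)).union (Set.finite_range _)).union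
      (Set.finite_range _)
  refine ⟨fun n hn => ⟨?_, ?_, ?_, ?_, ?_⟩, fun n hn hn0 => ⟨?_, ?_, ?_, ?_, ?_⟩⟩
  · intro x y
    obtain ⟨S, x, y, _, _, hS, rfl, rfl, -, -⟩ := lift n x y x x
    rw [emb_E, S.subtype.injective.of_comp_iff, S.subtype.injective.of_comp_iff]
    exact (hS.1 n hn).1 x y
  · intro x y σ τ
    obtain ⟨S, x, y, _, _, hS, rfl, rfl, -, -⟩ := lift n x y x x
    rw [Function.comp_assoc, Function.comp_assoc, emb_E, emb_E]
    exact (hS.1 n hn).2.1 x y σ τ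
  · intro x
    obtain ⟨S, x, _, _, _, hS, rfl, -, -, -⟩ := lift n x x x x
    rw [emb_E, S.subtype.injective.of_comp_iff]
    exact (hS.1 n hn).2.2.1 x
  · intro x y
    obtain ⟨S, x, y, _, _, hS, rfl, rfl, -, -⟩ := lift n x y x x
    rw [emb_E, emb_E]
    exact (hS.1 n hn).2.2.2.1 x y
  · intro x y z
    obtain ⟨S, x, y, z, _, hS, rfl, rfl, rfl, -⟩ := lift n x y z x
    rw [emb_E, emb_E, emb_E]
    exact (hS.1 n hn).2.2.2.2 x y z
  · intro x y
    obtain ⟨S, x, y, _, _, hS, rfl, rfl, -, -⟩ := lift n x y x x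
    rw [emb_L, S.subtype.injective.of_comp_iff, S.subtype.injective.of_comp_iff]
    exact (hS.2 n hn hn0).1 x y
  · intro x y z t
    obtain ⟨S, x, y, z, t, hS, rfl, rfl, rfl, rfl⟩ := lift n x y z t
    rw [emb_L, emb_E, emb_E, emb_L]
    exact (hS.2 n hn hn0).2.1 x y z t
  · intro x y
    obtain ⟨S, x, y, _, _, hS, rfl, rfl, -, -⟩ := lift n x y x x
    rw [emb_L, emb_E]
    exact (hS.2 n hn hn0).2.2.1 x y
  · intro x y z
    obtain ⟨S, x, y, z, _, hS, rfl, rfl, rfl, -⟩ := lift n x y z x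
    rw [emb_L, emb_L, emb_L]
    exact (hS.2 n hn hn0).2.2.2.1 x y z
  · intro x y
    obtain ⟨S, x, y, _, _, hS, rfl, rfl, -, -⟩ := lift n x y x x
    rw [emb_L, emb_L, emb_E, S.subtype.injective.of_comp_iff, S.subtype.injective.of_comp_iff]
    exact (hS.2 n hn hn0).2.2.2.2 x y

/-- Extension of `E_n` by a new class `none`. -/
def oE (P : Set ℕ) (M : Type) [(LP P).Structure M] (n : ℕ) (hn : 0 < n) :
    Option (Fin n → M) → Option (Fin n → M) → Prop
  | none, none => True
  | some a, some b => ERelP P M n hn a b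
  | _, _ => False

/-- Extension of `<_n` by a new top class `none`. -/
def oL (P : Set ℕ) (M : Type) [(LP P).Structure M] (n : ℕ) (hn : n ∈ P) :
    Option (Fin n → M) → Option (Fin n → M) → Prop
  | some _, none => True
  | some a, some b => LTRelP P M n hn a b
  | _, _ => False

open Classical in
/-- The class (given by a representative in `M`) of a tuple of `A ⊕ D`. -/
noncomputable def cls {M : Type} (A : Set M) (D : Type) (c : ℕ → Set D → Option ℕ)
    (x : (i : ℕ) → ℕ → (Fin i → M)) (n : ℕ) (w : Fin n → A ⊕ D) : Option (Fin n → M) :=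
  if h : ∃ u : Fin n → A, w = Sum.inl ∘ u then some (Subtype.val ∘ h.choose)
  else if h : ∃ u : Fin n → D, w = Sum.inr ∘ u then (c n (Set.range h.choose)).map (x n)
  else none

section
variable {M : Type} (A : Set M) (D : Type) (c : ℕ → Set D → Option ℕ)
    (x : (i : ℕ) → ℕ → (Fin i → M)) (n : ℕ)

theorem cls_inl (u : Fin n → A) : cls A D c x n (Sum.inl ∘ u) = some (Subtype.val ∘ u) := by
  have h : ∃ v : Fin n → A, (Sum.inl ∘ u : Fin n → A ⊕ D) = Sum.inl ∘ v := ⟨u, rfl⟩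
  unfold cls
  rw [dif_pos h]
  have := h.choose_spec
  have e : h.choose = u := (Sum.inl_injective.comp_left this).symm
  rw [e]

theorem cls_inr (hn : 0 < n) (u : Fin n → D) :
    cls A D c x n (Sum.inr ∘ u) = (c n (Set.range u)).map (x n) := by
  have h0 : ¬ ∃ v : Fin n → A, (Sum.inr ∘ u : Fin n → A ⊕ D) = Sum.inl ∘ v := by
    rintro ⟨v, hv⟩
    have := congrFun hv ⟨0, hn⟩
    simp at this
  have h : ∃ v : Fin n → D, (Sum.inr ∘ u : Fin n → A ⊕ D) = Sum.inr ∘ v := ⟨u, rfl⟩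
  unfold cls
  rw [dif_neg h0, dif_pos h]
  have := h.choose_spec
  have e : h.choose = u := (Sum.inr_injective.comp_left this).symm
  rw [e]

theorem cls_none (w : Fin n → A ⊕ D) (h1 : ¬ ∃ v : Fin n → A, w = Sum.inl ∘ v)
    (h2 : ¬ ∃ v : Fin n → D, w = Sum.inr ∘ v) : cls A D c x n w = none := by
  unfold cls
  rw [dif_neg h1, dif_neg h2]

theorem cls_inj (hn : 0 < n) (hinj : ∀ n s j, c n s = some j → Function.Injective (x n j))
    (w : Fin n → A ⊕ D) (hw : Function.Injective w) (a : Fin n → M)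
    (ha : cls A D c x n w = some a) : Function.Injective a := by
  by_cases h1 : ∃ v : Fin n → A, w = Sum.inl ∘ v
  · obtain ⟨v, rfl⟩ := h1
    rw [cls_inl] at ha
    cases ha
    exact Subtype.val_injective.comp (Function.Injective.of_comp hw)
  by_cases h2 : ∃ v : Fin n → D, w = Sum.inr ∘ v
  · obtain ⟨v, rfl⟩ := h2
    rw [cls_inr _ _ _ _ _ hn, Option.map_eq_some_iff] at ha
    obtain ⟨j, hj, rfl⟩ := ha
    exact hinj _ _ _ hj
  rw [cls_none _ _ _ _ _ w h1 h2] at ha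
  cases ha

variable (P : Set ℕ) [(LP P).Structure M]

theorem oE_perm (hM : IsKPStruct P M) (hn : 0 < n)
    (hinj : ∀ n s j, c n s = some j → Function.Injective (x n j))
    (w : Fin n → A ⊕ D) (hw : Function.Injective w) (σ : Equiv.Perm (Fin n)) :
    oE P M n hn (cls A D c x n w) (cls A D c x n (w ∘ σ)) := by
  obtain ⟨-, hperm, hrefl, -, -⟩ := hM.1 n hn
  by_cases h1 : ∃ v : Fin n → A, w = Sum.inl ∘ v
  · obtain ⟨v, rfl⟩ := h1
    rw [Function.comp_assoc, cls_inl, cls_inl]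
    exact hperm _ _ (Equiv.refl _) σ
      (hrefl _ (Subtype.val_injective.comp (Function.Injective.of_comp hw)))
  by_cases h2 : ∃ v : Fin n → D, w = Sum.inr ∘ v
  · obtain ⟨v, rfl⟩ := h2
    rw [Function.comp_assoc, cls_inr _ _ _ _ _ hn, cls_inr _ _ _ _ _ hn, EquivLike.range_comp]
    rcases hc : c n (Set.range v) with _ | j
    · trivial
    · exact hrefl _ (hinj _ _ _ hc)
  have back : ∀ {X : Type} (g : X → A ⊕ D), (¬ ∃ v : Fin n → X, w = g ∘ v) →
      ¬ ∃ v : Fin n → X, w ∘ σ = g ∘ v := by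
    rintro X g h ⟨v, hv⟩
    refine h ⟨v ∘ σ.symm, ?_⟩
    rw [← Function.comp_assoc, ← hv]
    ext i; simp
  rw [cls_none _ _ _ _ _ w h1 h2, cls_none _ _ _ _ _ _ (back _ h1) (back _ h2)]
  trivial

/-- The amalgam structure on `A ⊕ D`. -/
@[reducible] noncomputable def strC : (LP P).Structure (A ⊕ D) where
  funMap := fun f => f.elim
  RelMap := fun {a} r w => Sum.elim (α := {n : ℕ // 0 < n ∧ a = n + n})
    (β := {n : ℕ // n ∈ P ∧ a = n + n})
    (fun t => Function.Injective (fun i => w (Fin.cast t.2.2.symm (Fin.castAdd t.1 i))) ∧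
      Function.Injective (fun i => w (Fin.cast t.2.2.symm (Fin.natAdd t.1 i))) ∧
      oE P M t.1 t.2.1 (cls A D c x t.1 (fun i => w (Fin.cast t.2.2.symm (Fin.castAdd t.1 i))))
        (cls A D c x t.1 (fun i => w (Fin.cast t.2.2.symm (Fin.natAdd t.1 i)))))
    (fun t => Function.Injective (fun i => w (Fin.cast t.2.2.symm (Fin.castAdd t.1 i))) ∧
      Function.Injective (fun i => w (Fin.cast t.2.2.symm (Fin.natAdd t.1 i))) ∧
      oL P M t.1 t.2.1 (cls A D c x t.1 (fun i => w (Fin.cast t.2.2.symm (Fin.castAdd t.1 i))))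
        (cls A D c x t.1 (fun i => w (Fin.cast t.2.2.symm (Fin.natAdd t.1 i))))) r

theorem strC_E (hn : 0 < n) (u v : Fin n → A ⊕ D) :
    @ERelP P (A ⊕ D) (strC A D c x P) n hn u v ↔ Function.Injective u ∧ Function.Injective v ∧
        oE P M n hn (cls A D c x n u) (cls A D c x n v) := by
  have h1 : (fun i => Fin.append u v (Fin.castAdd n i)) = u := by
    ext i; rw [Fin.append_left]
  have h2 : (fun i => Fin.append u v (Fin.natAdd n i)) = v := by
    ext i; rw [Fin.append_right]
  change (Function.Injective (fun i => Fin.append u v (Fin.castAdd n i)) ∧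
    Function.Injective (fun i => Fin.append u v (Fin.natAdd n i)) ∧
    oE P M n hn (cls A D c x n (fun i => Fin.append u v (Fin.castAdd n i)))
      (cls A D c x n (fun i => Fin.append u v (Fin.natAdd n i)))) ↔ _
  rw [h1, h2]

theorem strC_L (hn : n ∈ P) (u v : Fin n → A ⊕ D) :
    @LTRelP P (A ⊕ D) (strC A D c x P) n hn u v ↔ Function.Injective u ∧ Function.Injective v ∧
        oL P M n hn (cls A D c x n u) (cls A D c x n v) := by
  have h1 : (fun i => Fin.append u v (Fin.castAdd n i)) = u := by
    ext i; rw [Fin.append_left]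
  have h2 : (fun i => Fin.append u v (Fin.natAdd n i)) = v := by
    ext i; rw [Fin.append_right]
  change (Function.Injective (fun i => Fin.append u v (Fin.castAdd n i)) ∧
    Function.Injective (fun i => Fin.append u v (Fin.natAdd n i)) ∧
    oL P M n hn (cls A D c x n (fun i => Fin.append u v (Fin.castAdd n i)))
      (cls A D c x n (fun i => Fin.append u v (Fin.natAdd n i)))) ↔ _
  rw [h1, h2]

theorem strC_KP (hM : IsKPStruct P M)
    (hinj : ∀ n s j, c n s = some j → Function.Injective (x n j)) :
    @IsKPStruct P (A ⊕ D) (strC A D c x P) := by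
  have hsymm : ∀ n hn a b, oE P M n hn a b → oE P M n hn b a := by
    rintro n hn (_ | a) (_ | b) h
    · trivial
    · exact h
    · exact h
    · exact (hM.1 n hn).2.2.2.1 _ _ h
  have htrans : ∀ n hn a b d, oE P M n hn a b → oE P M n hn b d → oE P M n hn a d := by
    rintro n hn (_ | a) (_ | b) (_ | d) h h' <;> first | trivial | exact h.elim | exact h'.elim | skip
    exact (hM.1 n hn).2.2.2.2 _ _ _ h h'
  letI := strC A D c x P
  refine ⟨fun n hn => ⟨?_, ?_, ?_, ?_, ?_⟩, fun n hn hn0 => ⟨?_, ?_, ?_, ?_, ?_⟩⟩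
  · intro u v
    rw [strC_E]
    exact fun h => ⟨h.1, h.2.1⟩
  · intro u v σ τ
    rw [strC_E, strC_E]
    rintro ⟨hu, hv, h⟩
    refine ⟨hu.comp σ.injective, hv.comp τ.injective, ?_⟩
    have h1 := oE_perm A D c x n P hM hn hinj u hu σ
    have h2 := oE_perm A D c x n P hM hn hinj v hv τ
    exact htrans _ _ _ _ _ (htrans _ _ _ _ _ (hsymm _ _ _ _ h1) h) h2
  · intro u hu
    rw [strC_E]
    exact ⟨hu, hu, oE_perm A D c x n P hM hn hinj u hu (Equiv.refl _)⟩
  · intro u v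
    rw [strC_E, strC_E]
    exact fun h => ⟨h.2.1, h.1, hsymm _ _ _ _ h.2.2⟩
  · intro u v w
    rw [strC_E, strC_E, strC_E]
    exact fun h h' => ⟨h.1, h'.2.1, htrans _ _ _ _ _ h.2.2 h'.2.2⟩
  · intro u v
    rw [strC_L]
    exact fun h => ⟨h.1, h.2.1⟩
  · intro u u' v v'
    rw [strC_E, strC_E, strC_L, strC_L]
    rintro ⟨-, hu, h1⟩ ⟨-, hv, h2⟩ ⟨-, -, h⟩
    refine ⟨hu, hv, ?_⟩
    revert h1 h2 h
    generalize cls A D c x n u = a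
    generalize cls A D c x n u' = a'
    generalize cls A D c x n v = b
    generalize cls A D c x n v' = b'
    rcases a with _ | a <;> rcases a' with _ | a' <;> rcases b with _ | b <;>
      rcases b' with _ | b' <;> intro h1 h2 h <;>
      first | trivial | exact h.elim | exact h1.elim | exact h2.elim | skip
    exact (hM.2 n hn hn0).2.1 _ _ _ _ h1 h2 h
  · intro u v
    rw [strC_E, strC_L]
    rintro ⟨-, -, h⟩ ⟨-, -, h'⟩
    revert h h'
    generalize cls A D c x n u = a
    generalize cls A D c x n v = b
    rcases a with _ | a <;> rcases b with _ | b <;> intro h h' <;>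
      first | exact h.elim | exact h'.elim | skip
    exact (hM.2 n hn hn0).2.2.1 _ _ h h'
  · intro u v w
    rw [strC_L, strC_L, strC_L]
    rintro ⟨hu, -, h⟩ ⟨-, hw, h'⟩
    refine ⟨hu, hw, ?_⟩
    revert h h'
    generalize cls A D c x n u = a
    generalize cls A D c x n v = b
    generalize cls A D c x n w = d
    rcases a with _ | a <;> rcases b with _ | b <;> rcases d with _ | d <;> intro h h' <;>
      first | trivial | exact h.elim | exact h'.elim | skip
    exact (hM.2 n hn hn0).2.2.2.1 _ _ _ h h'
  · intro u v hu hv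
    rw [strC_E, strC_L, strC_L]
    intro h
    have h : ¬ oE P M n hn0 (cls A D c x n u) (cls A D c x n v) := fun h' => h ⟨hu, hv, h'⟩
    suffices oL P M n hn (cls A D c x n u) (cls A D c x n v) ∨
        oL P M n hn (cls A D c x n v) (cls A D c x n u) from
      this.imp (fun h => ⟨hu, hv, h⟩) (fun h => ⟨hv, hu, h⟩)
    have ha := cls_inj A D c x n hn0 hinj u hu
    have hb := cls_inj A D c x n hn0 hinj v hv
    revert h ha hb
    generalize cls A D c x n u = a
    generalize cls A D c x n v = b
    rcases a with _ | a <;> rcases b with _ | b <;> intro h ha hb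
    · exact (h trivial).elim
    · exact Or.inr trivial
    · exact Or.inl trivial
    · exact (hM.2 n hn hn0).2.2.2.2 _ _ (ha _ rfl) (hb _ rfl) h

end

theorem realize (P : Set ℕ) (hP : ∀ n ∈ P, 3 ≤ n)
    (M : Type) [(LP P).Structure M]
    (hUH : (LP P).IsUltrahomogeneous M) (hage : (LP P).age M = KP P)
    (D : Type) [Finite D] (c : ℕ → Set D → Option ℕ)
    (x : (i : ℕ) → ℕ → (Fin i → M))
    (hinj : ∀ n s j, c n s = some j → Function.Injective (x n j))
    (hdom : ∀ n (hn : 0 < n) s j s' j', c n s = some j → c n s' = some j' →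
      ERelP P M n hn (x n j) (x n j') → j = j')
    (A : Set M) (hA : A.Finite) (hxA : ∀ n s j, c n s = some j → ∀ l, x n j l ∈ A) :
    ∃ d : D → M, Function.Injective d ∧
      (∀ n (hn : 0 < n) (u : Fin n → D) j, Function.Injective u → c n (Set.range u) = some j →
        ERelP P M n hn (x n j) (d ∘ u)) ∧
      (∀ n (hn : 0 < n) (u v : Fin n → D), ERelP P M n hn (d ∘ u) (d ∘ v) ↔
        Function.Injective u ∧ Function.Injective v ∧ c n (Set.range u) = c n (Set.range v)) ∧
      (∀ n (hn : n ∈ P) (u v : Fin n → D), LTRelP P M n hn (d ∘ u) (d ∘ v) ↔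
        Function.Injective u ∧ Function.Injective v ∧
          ∃ j, c n (Set.range u) = some j ∧ (c n (Set.range v) = none ∨
            ∃ j', c n (Set.range v) = some j' ∧ LTRelP P M n hn (x n j) (x n j'))) := by
  have hM := M_KP P M hage
  letI := strC A D c x P
  have hmem : (Bundled.of (A ⊕ D) : Bundled (LP P).Structure) ∈ KP P := by
    haveI := hA.to_subtype
    exact ⟨inferInstanceAs (Finite (A ⊕ D)), strC_KP A D c x P hM hinj⟩
  rw [← hage] at hmem
  obtain ⟨-, ⟨f⟩⟩ := hmem
  replace f : (A ⊕ D) ↪[LP P] M := f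
  let S := sub P M A
  let e : S ↪[LP P] (A ⊕ D) := mkEmb P (A := S) (fun a => Sum.inl (⟨a.1, a.2⟩ : A))
    (fun a b h => Subtype.ext (congrArg Subtype.val (Sum.inl_injective h)))
    (by
      intro n hn u v
      have h1 := strC_E A D c x n P hn (Sum.inl ∘ fun i => (⟨(u i).1, (u i).2⟩ : A))
        (Sum.inl ∘ fun i => (⟨(v i).1, (v i).2⟩ : A))
      rw [cls_inl, cls_inl] at h1
      rw [← emb_E P S.subtype]
      refine h1.trans ⟨fun h => h.2.2, fun h => ⟨?_, ?_, h⟩⟩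
      · have := ((hM.1 n hn).1 _ _ h).1
        exact fun a b hab => this (congrArg Subtype.val (Sum.inl_injective hab))
      · have := ((hM.1 n hn).1 _ _ h).2
        exact fun a b hab => this (congrArg Subtype.val (Sum.inl_injective hab)))
    (by
      intro n hn u v
      have h1 := strC_L A D c x n P hn (Sum.inl ∘ fun i => (⟨(u i).1, (u i).2⟩ : A))
        (Sum.inl ∘ fun i => (⟨(v i).1, (v i).2⟩ : A))
      rw [cls_inl, cls_inl] at h1
      rw [← emb_L P S.subtype]
      have hn0 : 0 < n := lt_of_lt_of_le (by norm_num) (hP n hn)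
      refine h1.trans ⟨fun h => h.2.2, fun h => ⟨?_, ?_, h⟩⟩
      · have := ((hM.2 n hn hn0).1 _ _ h).1
        exact fun a b hab => this (congrArg Subtype.val (Sum.inl_injective hab))
      · have := ((hM.2 n hn hn0).1 _ _ h).2
        exact fun a b hab => this (congrArg Subtype.val (Sum.inl_injective hab)))
  obtain ⟨g, hg⟩ := hUH S (sub_fg P M A hA) (f.comp e)
  let h : (A ⊕ D) ↪[LP P] M := g.symm.toEmbedding.comp f
  have hh : ∀ a : A, h (Sum.inl a) = a.1 := by
    intro a
    have := DFunLike.congr_fun hg (⟨a.1, a.2⟩ : S)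
    change f (Sum.inl a) = g a.1 at this
    change g.symm (f (Sum.inl a)) = a.1
    rw [this]; simp
  have oEc : ∀ n hn (u v : Fin n → D), oE P M n hn ((c n (Set.range u)).map (x n))
      ((c n (Set.range v)).map (x n)) ↔ c n (Set.range u) = c n (Set.range v) := by
    intro n hn u v
    rcases hu : c n (Set.range u) with _ | j <;> rcases hv : c n (Set.range v) with _ | j'
    · simp [oE]
    · simp [oE]
    · simp [oE]
    · simp only [Option.map_some, oE, Option.some.injEq]
      refine ⟨hdom n hn _ _ _ _ hu hv, ?_⟩
      rintro rfl
      exact (hM.1 n hn).2.2.1 _ (hinj _ _ _ hu)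
  refine ⟨fun p => h (Sum.inr p), fun p q hpq => Sum.inr_injective (h.injective hpq), ?_, ?_, ?_⟩
  · intro n hn u j hu hj
    have h1 := emb_E P h n hn (Sum.inl ∘ fun i => (⟨x n j i, hxA n _ j hj i⟩ : A)) (Sum.inr ∘ u)
    rw [strC_E, cls_inl, cls_inr _ _ _ _ _ hn, hj] at h1
    have h2 : h ∘ (Sum.inl ∘ fun i => (⟨x n j i, hxA n _ j hj i⟩ : A)) = x n j := by
      ext i; exact hh _
    rw [h2] at h1
    refine h1.2 ⟨Sum.inl_injective.comp ?_, Sum.inr_injective.comp hu, ?_⟩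
    · intro a b hab
      exact hinj _ _ _ hj (congrArg Subtype.val hab)
    · exact (hM.1 n hn).2.2.1 _ (hinj _ _ _ hj)
  · intro n hn u v
    have h1 := emb_E P h n hn (Sum.inr ∘ u) (Sum.inr ∘ v)
    rw [strC_E, cls_inr _ _ _ _ _ hn, cls_inr _ _ _ _ _ hn, oEc,
      Sum.inr_injective.of_comp_iff, Sum.inr_injective.of_comp_iff] at h1
    exact h1
  · intro n hn u v
    have hn0 : 0 < n := lt_of_lt_of_le (by norm_num) (hP n hn)
    have h1 := emb_L P h n hn (Sum.inr ∘ u) (Sum.inr ∘ v)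
    rw [strC_L, cls_inr _ _ _ _ _ hn0, cls_inr _ _ _ _ _ hn0,
      Sum.inr_injective.of_comp_iff, Sum.inr_injective.of_comp_iff] at h1
    refine Iff.trans h1 (and_congr_right fun _ => and_congr_right fun _ => ?_)
    rcases hu : c n (Set.range u) with _ | j <;> rcases hv : c n (Set.range v) with _ | j' <;>
      simp [oL]

end KPaux

/-- every finite family `(ρ_i)_{1 ≤ i ≤ k}` of finite partial injections on
the sets `M_i` of `E_i`-classes (order-preserving w.r.t. `<_i` when `i ∈ P`) is realised
by an automorphism of `M`.  The partial map `ρ_i` is presented by two lists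
`x i 0, …, x i (m i - 1)` and `y i 0, …, y i (m i - 1)` of representative tuples: `ρ_i`
sends the `E_i`-class of `x i j` to that of `y i j`. -/
theorem KP_limit_realizes_partial_maps (P : Set ℕ) (hP : ∀ n ∈ P, 3 ≤ n)
    (M : Type) [(LP P).Structure M] [Countable M]
    (hUH : (LP P).IsUltrahomogeneous M) (hage : (LP P).age M = KP P)
    (k : ℕ) (m : ℕ → ℕ) (x y : (i : ℕ) → ℕ → (Fin i → M))
    -- the representing tuples are injective
    (hinj : ∀ (i : ℕ), 0 < i → i ≤ k → ∀ j < m i,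
        Function.Injective (x i j) ∧ Function.Injective (y i j))
    -- distinct entries of the domain (resp. range) list represent distinct classes,
    -- so each ρ_i is a well-defined partial injection
    (hdom : ∀ (i : ℕ) (hi : 0 < i), i ≤ k → ∀ j < m i, ∀ j' < m i, j ≠ j' →
        ¬ ERelP P M i hi (x i j) (x i j') ∧ ¬ ERelP P M i hi (y i j) (y i j'))
    -- when i ∈ P, ρ_i is strictly increasing w.r.t. <_i
    (hord : ∀ (i : ℕ) (hiP : i ∈ P), i ≤ k → ∀ j < m i, ∀ j' < m i,
        (LTRelP P M i hiP (x i j) (x i j') ↔ LTRelP P M i hiP (y i j) (y i j'))) :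
    ∃ α : M ≃[LP P] M, ∀ (i : ℕ) (hi : 0 < i), i ≤ k → ∀ j < m i,
      ERelP P M i hi (fun l => α (x i j l)) (y i j) := by
  classical
  have hM := KPaux.M_KP P M hage
  let D : Type := {p : ℕ × ℕ × ℕ // p.1 ≤ k ∧ p.2.1 < m p.1 ∧ p.2.2 < p.1}
  haveI : Finite D := by
    let F : D → (i : Fin (k + 1)) × Fin (m i) × Fin i := fun p =>
      ⟨⟨p.1.1, Nat.lt_succ_of_le p.2.1⟩, ⟨p.1.2.1, p.2.2.1⟩, ⟨p.1.2.2, p.2.2.2⟩⟩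
    let G : ((i : Fin (k + 1)) × Fin (m i) × Fin i) → D := fun q =>
      ⟨(q.1.1, q.2.1.1, q.2.2.1), Nat.le_of_lt_succ q.1.2, q.2.1.2, q.2.2.2⟩
    exact Finite.of_injective F (Function.LeftInverse.injective (g := G) fun p => rfl)
  let B : ℕ → ℕ → Set D := fun n j => {p | p.1.1 = n ∧ p.1.2.1 = j}
  let c : ℕ → Set D → Option ℕ := fun n s =>
    if h : 0 < n ∧ n ≤ k ∧ ∃ j, j < m n ∧ s = B n j then some h.2.2.choose else none
  have hc : ∀ n s j, c n s = some j → 0 < n ∧ n ≤ k ∧ j < m n ∧ s = B n j := by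
    intro n s j h
    by_cases h' : 0 < n ∧ n ≤ k ∧ ∃ j, j < m n ∧ s = B n j
    · simp only [c, dif_pos h', Option.some.injEq] at h
      have := h'.2.2.choose_spec
      rw [h] at this
      exact ⟨h'.1, h'.2.1, this⟩
    · simp only [c, dif_neg h'] at h
      cases h
  have hcB : ∀ n j, 0 < n → n ≤ k → j < m n → c n (B n j) = some j := by
    intro n j h0 hk hj
    have h' : 0 < n ∧ n ≤ k ∧ ∃ j', j' < m n ∧ B n j = B n j' := ⟨h0, hk, j, hj, rfl⟩
    have h1 : c n (B n j) = some h'.2.2.choose := by simp only [c, dif_pos h']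
    have h2 := (hc _ _ _ h1).2.2.2
    have h3 : (⟨(n, j, 0), hk, hj, h0⟩ : D) ∈ B n j := ⟨rfl, rfl⟩
    rw [h2] at h3
    rw [h1]
    exact congrArg some h3.2.symm
  have fin : ∀ z : (i : ℕ) → ℕ → (Fin i → M),
      (⋃ i ∈ Set.Iic k, ⋃ j ∈ Set.Iio (m i), Set.range (z i j)).Finite := fun z =>
    (Set.finite_Iic k).biUnion fun i _ => (Set.finite_Iio (m i)).biUnion fun j _ =>
      Set.finite_range _
  have fin' : ∀ (z : (i : ℕ) → ℕ → (Fin i → M)) n s j, c n s = some j → ∀ l, z n j l ∈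
      (⋃ i ∈ Set.Iic k, ⋃ j ∈ Set.Iio (m i), Set.range (z i j)) := by
    intro z n s j h l
    obtain ⟨h0, hk, hj, -⟩ := hc n s j h
    simp only [Set.mem_iUnion]
    exact ⟨n, hk, j, hj, l, rfl⟩
  obtain ⟨d, hd, hd1, hdE, hdL⟩ := KPaux.realize P hP M hUH hage D c x
    (fun n s j h => by
      obtain ⟨h0, hk, hj, -⟩ := hc n s j h
      exact (hinj n h0 hk j hj).1)
    (fun n hn s j s' j' h h' hE => by
      obtain ⟨h0, hk, hj, -⟩ := hc n s j h
      obtain ⟨-, -, hj', -⟩ := hc n s' j' h'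
      by_contra hne
      exact (hdom n hn hk j hj j' hj' hne).1 hE) _ (fin x) (fin' x)
  obtain ⟨d', hd', hd1', hdE', hdL'⟩ := KPaux.realize P hP M hUH hage D c y
    (fun n s j h => by
      obtain ⟨h0, hk, hj, -⟩ := hc n s j h
      exact (hinj n h0 hk j hj).2)
    (fun n hn s j s' j' h h' hE => by
      obtain ⟨h0, hk, hj, -⟩ := hc n s j h
      obtain ⟨-, -, hj', -⟩ := hc n s' j' h'
      by_contra hne
      exact (hdom n hn hk j hj j' hj' hne).2 hE) _ (fin y) (fin' y)
  let S := KPaux.sub P M (Set.range d)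
  let q : S → D := fun a => (show (a : M) ∈ Set.range d from a.2).choose
  have hq : ∀ a : S, d (q a) = a := fun a => (show (a : M) ∈ Set.range d from a.2).choose_spec
  have hq' : ∀ {n : ℕ} (u : Fin n → S), S.subtype ∘ u = d ∘ (q ∘ u) := by
    intro n u
    ext i
    exact (hq (u i)).symm
  have hLL : ∀ n (hn : n ∈ P) (u v : Fin n → D),
      LTRelP P M n hn (d' ∘ u) (d' ∘ v) ↔ LTRelP P M n hn (d ∘ u) (d ∘ v) := by
    intro n hn u v
    rw [hdL, hdL']
    refine and_congr_right fun _ => and_congr_right fun _ => exists_congr fun j =>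
      and_congr_right fun h => or_congr_right (exists_congr fun j' => and_congr_right fun h' => ?_)
    obtain ⟨h0, hk, hj, -⟩ := hc n _ j h
    obtain ⟨-, -, hj', -⟩ := hc n _ j' h'
    exact (hord n hn hk j hj j' hj').symm
  let f : S ↪[LP P] M := KPaux.mkEmb P (fun a => d' (q a))
    (fun a b h => by
      have h1 := hd' h
      apply Subtype.ext
      rw [← hq a, ← hq b, h1])
    (fun n hn u v => by
      rw [← KPaux.emb_E P S.subtype, hq', hq', hdE]
      exact hdE' n hn (q ∘ u) (q ∘ v))
    (fun n hn u v => by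
      rw [← KPaux.emb_L P S.subtype, hq', hq', ← hLL]
      rfl)
  obtain ⟨α, hα⟩ := hUH S (KPaux.sub_fg P M _ (Set.finite_range d)) f
  have hαd : ∀ p : D, α (d p) = d' p := by
    intro p
    have h1 := DFunLike.congr_fun hα (⟨d p, ⟨p, rfl⟩⟩ : S)
    change d' (q (⟨d p, ⟨p, rfl⟩⟩ : S)) = α (d p) at h1
    rw [← h1]
    congr 1
    exact hd (hq _)
  refine ⟨α, fun i hi hik j hj => ?_⟩
  let b : Fin i → D := fun l => ⟨(i, j, l), hik, hj, l.2⟩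
  have hb : Function.Injective b := by
    intro l l' h
    have := congrArg (fun p : D => p.1.2.2) h
    exact Fin.ext this
  have hbr : Set.range b = B i j := by
    ext p
    constructor
    · rintro ⟨l, rfl⟩
      exact ⟨rfl, rfl⟩
    · obtain ⟨⟨i', j', l⟩, h1, h2, h3⟩ := p
      rintro ⟨e1, e2⟩
      simp only at e1 e2
      subst e1 e2
      exact ⟨⟨l, h3⟩, rfl⟩
  have hcb : c i (Set.range b) = some j := by rw [hbr]; exact hcB i j hi hik hj
  have h1 := hd1 i hi b j hb hcb
  have h2 := hd1' i hi b j hb hcb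
  rw [← KPaux.emb_E P α.toEmbedding] at h1
  have h3 : α.toEmbedding ∘ (d ∘ b) = d' ∘ b := by
    ext l; exact hαd _
  rw [h3] at h1
  obtain ⟨-, -, -, hsymm, htrans⟩ := hM.1 i hi
  exact htrans _ _ _ h1 (hsymm _ _ h2)
end
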